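/- arXiv:1109.1836 — 3 statements merged into one kernel-verified Lean document; each statement's English description precedes it below -/
import Mathlib

section
/- Let n ≥ 1, 1 ≤ p₀ ≤ p₁ < ∞, 0 < s₀ ≤ s₁ < ∞, q ∈ [1,∞), and let 1 < σ₀ < σ₁ < ∞ satisfy 1/σ₀ − 1/σ₁ = 1 − (s₁ − s₀ + n/p₀ − n/p₁)/2, with 0 < s₁ − s₀ + n/p₀ − n/p₁ < 2. Then there is a constant C > 0 such that: for every T ∈ (0,1] and every map u : (0,T) × ℝⁿ → ℝ which is continuous in t and Schwartz class in x for each t, ( ∫₀^T ‖ ∫₀ᵗ e^{(t−s)Δ} u(s) ds ‖^{σ₁}_{B^{s₁}_{p₁,q}} dt )^{1/σ₁} ≤ C ( ∫₀^T ‖u(t)‖^{σ₀}_{B^{s₀}_{p₀,q}} dt )^{1/σ₀}. -/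
open MeasureTheory Real Filter
open scoped ENNReal FourierTransform

noncomputable section

/-- `ℝⁿ` as a Euclidean space. -/
abbrev Rn (n : ℕ) : Type := EuclideanSpace ℝ (Fin n)

variable {n : ℕ}

/-- The Fourier transform of a real-valued Schwartz function, viewed as a ℂ-valued function. -/
def ftC (f : SchwartzMap (Rn n) ℝ) : Rn n → ℂ :=
  𝓕 (fun x => (f x : ℂ))

/-- `ψ₀` is a Littlewood–Paley function: an even, radial Schwartz function whose Fourier
transform is nonnegative, supported in the annulus `{ξ : 1/2 < ‖ξ‖ < 2}`, and satisfies
`∑_{j ∈ ℤ} ψ̂₀(2^{-j} ξ) = 1` for `ξ ≠ 0`. -/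
structure IsLPF (n : ℕ) (ψ₀ : SchwartzMap (Rn n) ℝ) : Prop where
  even : ∀ x : Rn n, ψ₀ (-x) = ψ₀ x
  radial : ∀ x y : Rn n, ‖x‖ = ‖y‖ → ψ₀ x = ψ₀ y
  ft_im : ∀ ξ : Rn n, (ftC ψ₀ ξ).im = 0
  ft_nonneg : ∀ ξ : Rn n, 0 ≤ (ftC ψ₀ ξ).re
  ft_supp : ∀ ξ : Rn n, ftC ψ₀ ξ ≠ 0 → 1/2 < ‖ξ‖ ∧ ‖ξ‖ < 2
  ft_sum : ∀ ξ : Rn n, ξ ≠ 0 → HasSum (fun j : ℤ => ftC ψ₀ ((2:ℝ) ^ (-j) • ξ)) 1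

/-- The Littlewood–Paley kernel `ψ_j(x) = 2^{jn} ψ₀(2^j x)`, whose Fourier transform is
`ψ̂₀(2^{-j} ξ)`. -/
def lpKernel (ψ₀ : SchwartzMap (Rn n) ℝ) (j : ℤ) (x : Rn n) : ℝ :=
  (2:ℝ) ^ (j * (n:ℤ)) * ψ₀ ((2:ℝ) ^ j • x)

/-- The Littlewood–Paley projection `Δ_j f = ψ_j ∗ f`. -/
def lpProj (ψ₀ : SchwartzMap (Rn n) ℝ) (j : ℤ) (f : Rn n → ℝ) : Rn n → ℝ :=
  MeasureTheory.convolution (lpKernel ψ₀ j) f (ContinuousLinearMap.mul ℝ ℝ) volume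

/-- `S_j f = ∑_{m ≤ j} Δ_m f`, the low-frequency cutoff; this is the L² function whose
Fourier transform is `(∑_{m ≤ j} ψ̂₀(2^{-m} ξ)) f̂(ξ)`. -/
def lowProj (ψ₀ : SchwartzMap (Rn n) ℝ) (j : ℤ) (f : Rn n → ℝ) (x : Rn n) : ℝ :=
  ∑' m : ℤ, if m ≤ j then lpProj ψ₀ m f x else 0

/-- `Ψ` is the low-frequency piece of the Littlewood–Paley decomposition:
`Ψ̂ = 1 − ∑_{k ≥ 0} ψ̂_k`. -/
def IsLowPiece (ψ₀ Ψ : SchwartzMap (Rn n) ℝ) : Prop :=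
  ∀ ξ : Rn n, ftC Ψ ξ = 1 - ∑' k : ℕ, ftC ψ₀ ((2:ℝ) ^ (-(k:ℤ)) • ξ)

/-- The inhomogeneous Besov norm `‖f‖_{B^s_{p,q}}`, valued in `[0,∞]`:
`‖Ψ∗f‖_{L^p} + (∑_{j ≥ 0} (2^{js} ‖Δ_j f‖_{L^p})^q)^{1/q}`, with the supremum over `j`
replacing the `ℓ^q` sum when `q = ∞`. -/
def besovNorm (ψ₀ Ψ : SchwartzMap (Rn n) ℝ) (s : ℝ) (p q : ℝ≥0∞) (f : Rn n → ℝ) : ℝ≥0∞ :=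
  eLpNorm (MeasureTheory.convolution (fun x => Ψ x) f (ContinuousLinearMap.mul ℝ ℝ) volume)
      p volume +
    (if q = ∞ then
      ⨆ j : ℕ, ENNReal.ofReal ((2:ℝ) ^ ((j:ℝ) * s)) * eLpNorm (lpProj ψ₀ (j:ℤ) f) p volume
    else
      (∑' j : ℕ, (ENNReal.ofReal ((2:ℝ) ^ ((j:ℝ) * s)) *
        eLpNorm (lpProj ψ₀ (j:ℤ) f) p volume) ^ q.toReal) ^ (1 / q.toReal))

/-- The heat semigroup `e^{tΔ} f = h_t ∗ f` with `h_t(x) = (4πt)^{-n/2} e^{-‖x‖²/(4t)}`. -/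
def heatOp (n : ℕ) (t : ℝ) (f : Rn n → ℝ) : Rn n → ℝ :=
  MeasureTheory.convolution
    (fun x : Rn n => (4 * π * t) ^ (-(n:ℝ)/2) * Real.exp (-‖x‖^2 / (4*t))) f
    (ContinuousLinearMap.mul ℝ ℝ) volume

/-- The partial derivative `∂_{x_i} f`. -/
def pderiv' (i : Fin n) (f : Rn n → ℝ) (x : Rn n) : ℝ :=
  fderiv ℝ f x (EuclideanSpace.single i 1)

/-- The Laplacian `Δf = ∑ᵢ ∂²_{x_i} f`. -/
def lapl (f : Rn n → ℝ) (x : Rn n) : ℝ :=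
  ∑ i : Fin n, pderiv' i (pderiv' i f) x

theorem mink_aux {α β : Type*} [MeasurableSpace α] [MeasurableSpace β] (μ : Measure α)
    (ν : Measure β) [SFinite μ] [SFinite ν] (F : α → β → ℝ≥0∞)
    (hF : Measurable (Function.uncurry F)) (p : ℝ) (hp : 1 < p) (H : β → ℝ≥0∞)
    (hH : Measurable H) (hHG : ∀ y, H y ≤ ∫⁻ x, F x y ∂μ) (hfin : ∫⁻ y, H y ^ p ∂ν ≠ ∞) :
    ∫⁻ y, H y ^ p ∂ν ≤ (∫⁻ x, (∫⁻ y, F x y ^ p ∂ν) ^ (1/p) ∂μ) ^ p := by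
  set X := ∫⁻ y, H y ^ p ∂ν with hX
  set A := ∫⁻ x, (∫⁻ y, F x y ^ p ∂ν) ^ (1/p) ∂μ with hA
  have hp0 : 0 < p := by linarith
  have hpq : p.HolderConjugate (p / (p - 1)) := Real.HolderConjugate.conjExponent hp
  set q := p / (p - 1) with hq
  have hp1 : p - 1 ≠ 0 := by linarith
  have key : X ≤ A * X ^ (1/q) := by
    calc X ≤ ∫⁻ y, ∫⁻ x, F x y * H y ^ (p-1) ∂μ ∂ν := by
          apply lintegral_mono
          intro y
          simp only
          rw [lintegral_mul_const _ (by exact hF.comp (measurable_id.prodMk measurable_const))]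
          calc H y ^ p = H y * H y ^ (p-1) := by
                nth_rewrite 2 [← ENNReal.rpow_one (H y)]
                rw [← ENNReal.rpow_add_of_nonneg _ _ (by norm_num) (by linarith)]
                congr 1; ring
            _ ≤ _ := by gcongr; exact hHG y
      _ = ∫⁻ x, ∫⁻ y, F x y * H y ^ (p-1) ∂ν ∂μ := by
          rw [lintegral_lintegral_swap]
          apply Measurable.aemeasurable
          exact (hF.comp measurable_swap).mul ((hH.comp measurable_fst).pow_const _)
      _ ≤ ∫⁻ x, (∫⁻ y, F x y ^ p ∂ν) ^ (1/p) * X ^ (1/q) ∂μ := by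
          apply lintegral_mono
          intro x
          have hm : Measurable (F x) := hF.comp (measurable_const.prodMk measurable_id)
          have := ENNReal.lintegral_mul_le_Lp_mul_Lq ν hpq hm.aemeasurable
            (hH.pow_const (p-1)).aemeasurable
          have e : ∀ y, (H y ^ (p-1)) ^ q = H y ^ p := by
            intro y
            rw [← ENNReal.rpow_mul]; congr 1; rw [hq]; field_simp
          simp only [Pi.mul_apply, e] at this
          exact this
      _ = A * X ^ (1/q) := by
          rw [lintegral_mul_const]
          exact (Measurable.lintegral_prod_right (f := fun x y => F x y ^ p)
            (hF.pow_const p)).pow_const _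
  rcases eq_or_ne X 0 with h0 | h0
  · rw [h0]; simp
  have hX' : X ^ (1/q) ≠ 0 := by simp [ENNReal.rpow_eq_zero_iff, h0, hfin]
  have hX'' : X ^ (1/q) ≠ ∞ := by
    apply ENNReal.rpow_ne_top_of_nonneg _ hfin
    have := hpq.symm.pos
    positivity
  have h1 : X ^ (1/p) ≤ A := by
    have : X = X ^ (1/p) * X ^ (1/q) := by
      rw [← ENNReal.rpow_add _ _ h0 hfin, one_div, one_div, hpq.inv_add_inv_eq_one,
        ENNReal.rpow_one]
    exact (ENNReal.mul_le_mul_iff_left hX' hX'').1 (this.symm.le.trans key)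
  calc X = (X ^ (1/p)) ^ p := by rw [← ENNReal.rpow_mul]; simp [hp0.ne']
    _ ≤ A ^ p := by gcongr

theorem mink {α β : Type*} [MeasurableSpace α] [MeasurableSpace β] (μ : Measure α)
    (ν : Measure β) [SFinite μ] [SigmaFinite ν] (F : α → β → ℝ≥0∞)
    (hF : Measurable (Function.uncurry F)) (p : ℝ) (hp : 1 ≤ p) :
    (∫⁻ y, (∫⁻ x, F x y ∂μ) ^ p ∂ν) ^ (1/p) ≤ ∫⁻ x, (∫⁻ y, F x y ^ p ∂ν) ^ (1/p) ∂μ := by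
  rcases hp.eq_or_lt with h | hp
  · subst h
    simp only [ENNReal.rpow_one, div_one]
    rw [lintegral_lintegral_swap]
    exact (hF.comp measurable_swap).aemeasurable
  have hp0 : 0 < p := by linarith
  set A := ∫⁻ x, (∫⁻ y, F x y ^ p ∂ν) ^ (1/p) ∂μ with hA
  suffices h : ∫⁻ y, (∫⁻ x, F x y ∂μ) ^ p ∂ν ≤ A ^ p by
    calc _ ≤ (A ^ p) ^ (1/p) := by gcongr
      _ = A := by rw [← ENNReal.rpow_mul]; simp [hp0.ne']
  set G : β → ℝ≥0∞ := fun y => ∫⁻ x, F x y ∂μ with hG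
  have hGm : Measurable G := Measurable.lintegral_prod_left (f := F) hF
  set H : ℕ → β → ℝ≥0∞ := fun N => (spanningSets ν N).indicator (fun y => min (G y) N) with hH
  have hHm : ∀ N, Measurable (H N) := fun N =>
    (hGm.min measurable_const).indicator (measurableSet_spanningSets ν N)
  have hHb : ∀ N, ∫⁻ y, H N y ^ p ∂ν ≤ A ^ p := by
    intro N
    apply mink_aux μ ν F hF p hp (H N) (hHm N)
    · intro y
      simp only [hH, Set.indicator]
      split_ifs
      · exact min_le_left _ _
      · simp
    · have : ∫⁻ y, H N y ^ p ∂ν ≤ ∫⁻ y, (spanningSets ν N).indicator (fun _ => (N:ℝ≥0∞) ^ p) y ∂ν := by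
        apply lintegral_mono
        intro y
        simp only [hH, Set.indicator]
        split_ifs
        · gcongr; exact min_le_right _ _
        · simp [hp0]
      refine ne_top_of_le_ne_top ?_ this
      rw [lintegral_indicator_const (measurableSet_spanningSets ν N)]
      apply ENNReal.mul_ne_top
      · exact ENNReal.rpow_ne_top_of_nonneg hp0.le (by simp)
      · exact (measure_spanningSets_lt_top ν N).ne
  have hlim : ∀ y, Tendsto (fun N => H N y ^ p) atTop (nhds (G y ^ p)) := by
    intro y
    apply (ENNReal.continuous_rpow_const.tendsto _).comp
    have h1 : Tendsto (fun N : ℕ => min (G y) (N:ℝ≥0∞)) atTop (nhds (min (G y) ∞)) :=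
      tendsto_const_nhds.min ENNReal.tendsto_nat_nhds_top
    rw [min_eq_left le_top] at h1
    apply h1.congr'
    obtain ⟨N0, hN0⟩ : ∃ N, y ∈ spanningSets ν N := by
      have : y ∈ ⋃ i, spanningSets ν i := by rw [iUnion_spanningSets]; trivial
      exact Set.mem_iUnion.1 this
    filter_upwards [eventually_ge_atTop N0] with N hN
    simp only [hH, Set.indicator]
    rw [if_pos (monotone_spanningSets ν hN hN0)]
  calc ∫⁻ y, G y ^ p ∂ν = ∫⁻ y, liminf (fun N => H N y ^ p) atTop ∂ν := by
        congr 1; ext y; exact (hlim y).liminf_eq.symm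
    _ ≤ liminf (fun N => ∫⁻ y, H N y ^ p ∂ν) atTop := lintegral_liminf_le fun N => (hHm N).pow_const p
    _ ≤ A ^ p := by
        apply liminf_le_of_le
        · isBoundedDefault
        · intro b hb
          obtain ⟨N, hN⟩ := hb.exists
          exact hN.trans (hHb N)

theorem lint_pow (m X : ℝ) (hm : 0 < m) (hX : 0 ≤ X) :
    ∫⁻ l in Set.Ioo 0 X, ENNReal.ofReal (l ^ (m-1)) = ENNReal.ofReal (X ^ m / m) := by
  have h1 : IntervalIntegrable (fun l : ℝ => l ^ (m-1)) volume 0 X :=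
    intervalIntegral.intervalIntegrable_rpow' (by linarith)
  have h2 := integral_rpow (a := 0) (b := X) (r := m - 1) (Or.inl (by linarith))
  rw [intervalIntegral.integral_of_le hX, integral_Ioc_eq_integral_Ioo] at h2
  have h3 : IntegrableOn (fun l : ℝ => l ^ (m-1)) (Set.Ioo 0 X) :=
    (intervalIntegrable_iff_integrableOn_Ioo_of_le hX).1 h1
  rw [← ofReal_integral_eq_lintegral_ofReal h3, h2]
  · congr 1
    simp [Real.zero_rpow hm.ne']
  · rw [Filter.EventuallyLE, ae_restrict_iff' measurableSet_Ioo]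
    filter_upwards with l hl
    exact Real.rpow_nonneg hl.1.le _

theorem lint_tail (e R : ℝ) (he : 1 < e) (hR : 0 < R) :
    ∫⁻ l in Set.Ioi R, ENNReal.ofReal (l ^ (-e)) = ENNReal.ofReal (R ^ (1 - e) / (e - 1)) := by
  have h3 := integrableOn_Ioi_rpow_of_lt (a := -e) (by linarith) hR
  have h2 := integral_Ioi_rpow_of_lt (a := -e) (by linarith) hR
  rw [← ofReal_integral_eq_lintegral_ofReal h3, h2]
  · congr 1
    rw [show -e + 1 = 1 - e by ring, ← neg_div_neg_eq]; congr 1 <;> ring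
  · rw [Filter.EventuallyLE, ae_restrict_iff' measurableSet_Ioi]
    filter_upwards with l hl
    exact Real.rpow_nonneg (hR.le.trans hl.le) _

theorem layer (m : ℝ) (hm : 0 < m) (F : ℝ≥0∞) :
    F ^ m ≤ ∫⁻ l in Set.Ioi (0:ℝ), (if ENNReal.ofReal l < F then ENNReal.ofReal (m * l ^ (m-1)) else 0) := by
  have fin : ∀ r : ℝ, 0 ≤ r → ENNReal.ofReal r ≤ F → ENNReal.ofReal (r ^ m) ≤ ∫⁻ l in Set.Ioi (0:ℝ), (if ENNReal.ofReal l < F then ENNReal.ofReal (m * l ^ (m-1)) else 0) := by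
    intro r hr hrF
    have : ENNReal.ofReal (r ^ m) = ∫⁻ l in Set.Ioo 0 r, ENNReal.ofReal (m * l ^ (m-1)) := by
      simp_rw [ENNReal.ofReal_mul hm.le]
      rw [lintegral_const_mul' _ _ (by simp), lint_pow m r hm hr, ← ENNReal.ofReal_mul hm.le]
      congr 1; field_simp
    rw [this]
    calc _ ≤ ∫⁻ l in Set.Ioo 0 r, (if ENNReal.ofReal l < F then ENNReal.ofReal (m * l ^ (m-1)) else 0) := by
          apply setLIntegral_mono' measurableSet_Ioo
          intro l hl
          rw [if_pos]
          exact lt_of_lt_of_le ((ENNReal.ofReal_lt_ofReal_iff (hl.1.trans hl.2)).2 hl.2) hrF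
      _ ≤ _ := lintegral_mono_set (fun l hl => hl.1)
  rcases eq_or_ne F ∞ with h | h
  · have : (∫⁻ l in Set.Ioi (0:ℝ), (if ENNReal.ofReal l < F then ENNReal.ofReal (m * l ^ (m-1)) else 0)) = ∞ := by
      apply ENNReal.eq_top_of_forall_nnreal_le
      intro r
      have := fin ((r:ℝ) ^ (1/m)) (by positivity) (by simp [h])
      rw [← Real.rpow_mul (by positivity)] at this
      simpa [hm.ne'] using this
    rw [this]; exact le_top
  · have := fin F.toReal ENNReal.toReal_nonneg (by rw [ENNReal.ofReal_toReal h])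
    rwa [← ENNReal.ofReal_rpow_of_nonneg ENNReal.toReal_nonneg hm.le, ENNReal.ofReal_toReal h] at this

def hlsK (θ : ℝ) (r : ℝ) : ℝ≥0∞ := if 0 < r then ENNReal.ofReal (r ^ (-θ)) else 0

theorem hlsK_meas (θ : ℝ) : Measurable (hlsK θ) := by
  unfold hlsK
  apply Measurable.ite measurableSet_Ioi _ measurable_const
  fun_prop

/-- superlevel estimate -/
theorem hls_level (σ₀ σ₁ θ : ℝ) (h0 : 1 < σ₀) (h01 : σ₀ < σ₁) (hθ : θ < 1)
    (hd : 1/σ₀ - 1/σ₁ = 1 - θ) (f : ℝ → ℝ≥0∞) (hf : Measurable f) (hf1 : ∫⁻ s, f s ^ σ₀ ≤ 1)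
    (l R a : ℝ) (hl : 0 < l) (hR : 0 < R) (ha : 0 < a)
    (hR1 : (R ^ (1 - θ * (σ₀/(σ₀-1))) / (θ * (σ₀/(σ₀-1)) - 1)) ^ (1/(σ₀/(σ₀-1))) ≤ l / 3)
    (ha1 : a * (R ^ (1-θ) / (1-θ)) = l / 3) :
    volume {t | ENNReal.ofReal l < ∫⁻ s, hlsK θ (t - s) * f s} ≤
      (ENNReal.ofReal a)⁻¹ * ∫⁻ s, (if ENNReal.ofReal a < f s then f s else 0) := by
  set K1 : ℝ → ℝ≥0∞ := fun r => if r < R then hlsK θ r else 0 with hK1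
  set K2 : ℝ → ℝ≥0∞ := fun r => if R ≤ r then hlsK θ r else 0 with hK2
  set g : ℝ → ℝ≥0∞ := fun s => if ENNReal.ofReal a < f s then f s else 0 with hg
  have hK1m : Measurable K1 := Measurable.ite measurableSet_Iio (hlsK_meas θ) measurable_const
  have hK2m : Measurable K2 := Measurable.ite measurableSet_Ici (hlsK_meas θ) measurable_const
  have hgm : Measurable g := Measurable.ite (measurableSet_lt measurable_const hf) hf measurable_const
  have hpq : σ₀.HolderConjugate (σ₀ / (σ₀ - 1)) := Real.HolderConjugate.conjExponent h0
  set q := σ₀ / (σ₀ - 1) with hq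
  have hq0 : 0 < q := hpq.symm.pos
  have hq1 : 1 / q = 1 - 1/σ₀ := by
    have := hpq.inv_add_inv_eq_one
    rw [one_div, one_div]; linarith
  have hσ1 : 0 < 1/σ₁ := by have : 0 < σ₁ := by linarith
                            positivity
  have hθq : 1 < θ * q := by
    have : 1/q < θ := by linarith
    rwa [div_lt_iff₀ hq0] at this
  -- L1 norm of K1
  have hK1int : ∫⁻ r, K1 r = ENNReal.ofReal (R ^ (1-θ) / (1-θ)) := by
    rw [← lint_pow (1-θ) R (by linarith) hR.le, ← lintegral_indicator measurableSet_Ioo]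
    congr 1; ext r
    simp only [hK1, hlsK, Set.indicator, Set.mem_Ioo]
    rw [show 1 - θ - 1 = -θ by ring]
    split_ifs <;> first | rfl | tauto
  have hK2int : ∫⁻ r, K2 r ^ q ≤ ENNReal.ofReal (R ^ (1 - θ*q) / (θ * q - 1)) := by
    rw [← lint_tail (θ*q) R hθq hR, ← setLIntegral_congr Ioi_ae_eq_Ici.symm, ← lintegral_indicator measurableSet_Ici]
    apply lintegral_mono
    intro r
    simp only [hK2, hlsK, Set.indicator, Set.mem_Ici]
    split_ifs with h1 h2
    · rw [ENNReal.ofReal_rpow_of_nonneg (by positivity) hq0.le, ← Real.rpow_mul h2.le, neg_mul]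
    · simp [hq0]
    · simp [hq0]
  have trans : ∀ (h : ℝ → ℝ≥0∞) (t : ℝ), ∫⁻ s, h (t - s) = ∫⁻ s, h s := fun h t =>
    lintegral_sub_left_eq_self h t
  -- tail part
  have hB : ∀ t, ∫⁻ s, K2 (t - s) * f s ≤ ENNReal.ofReal (l/3) := by
    intro t
    have := ENNReal.lintegral_mul_le_Lp_mul_Lq volume hpq.symm
      (hK2m.comp (measurable_const.sub measurable_id)).aemeasurable hf.aemeasurable (f := fun s => K2 (t - s))
    simp only [Pi.mul_apply] at this
    refine this.trans ?_
    rw [trans (fun r => K2 r ^ q) t]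
    calc (∫⁻ r, K2 r ^ q) ^ (1/q) * (∫⁻ s, f s ^ σ₀) ^ (1/σ₀)
        ≤ (ENNReal.ofReal (R ^ (1 - θ*q) / (θ * q - 1))) ^ (1/q) * 1 ^ (1/σ₀) := by gcongr
      _ = ENNReal.ofReal ((R ^ (1 - θ*q) / (θ * q - 1)) ^ (1/q)) := by
          rw [ENNReal.one_rpow, mul_one, ENNReal.ofReal_rpow_of_nonneg _ (by positivity)]
          have : 0 < θ * q - 1 := by linarith
          positivity
      _ ≤ _ := ENNReal.ofReal_le_ofReal hR1
  have hA : ∀ t, ∫⁻ s, K1 (t - s) * f s ≤ (∫⁻ s, K1 (t - s) * g s) + ENNReal.ofReal (l/3) := by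
    intro t
    calc ∫⁻ s, K1 (t - s) * f s ≤ ∫⁻ s, (K1 (t - s) * g s + K1 (t - s) * ENNReal.ofReal a) := by
          apply lintegral_mono
          intro s
          simp only [← mul_add]
          gcongr
          simp only [hg]
          split_ifs with h
          · exact le_self_add
          · simpa using h
      _ = (∫⁻ s, K1 (t - s) * g s) + ENNReal.ofReal (l/3) := by
          rw [lintegral_add_right, lintegral_mul_const]
          · rw [trans K1 t, hK1int, ← ENNReal.ofReal_mul', mul_comm, ha1]; exact ha.le
          · fun_prop
          · fun_prop
  have hsub : {t | ENNReal.ofReal l < ∫⁻ s, hlsK θ (t - s) * f s} ⊆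
      {t | ENNReal.ofReal (l/3) ≤ ∫⁻ s, K1 (t - s) * g s} := by
    intro t ht
    rw [Set.mem_ofPred_eq] at ht ⊢
    by_contra! hcon
    have : ∫⁻ s, hlsK θ (t - s) * f s ≤ (∫⁻ s, K1 (t - s) * f s) + ∫⁻ s, K2 (t - s) * f s := by
      rw [← lintegral_add_left (by fun_prop)]
      apply lintegral_mono
      intro s
      simp only [← add_mul]
      gcongr
      simp only [hK1, hK2]
      split_ifs <;> first | (exfalso; linarith) | simp
    have h2 := calc ∫⁻ s, hlsK θ (t - s) * f s
        ≤ ((∫⁻ s, K1 (t - s) * g s) + ENNReal.ofReal (l/3)) + ENNReal.ofReal (l/3) :=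
          this.trans (add_le_add (hA t) (hB t))
      _ ≤ (ENNReal.ofReal (l/3) + ENNReal.ofReal (l/3)) + ENNReal.ofReal (l/3) := by gcongr
      _ = ENNReal.ofReal l := by
          rw [← ENNReal.ofReal_add (by positivity) (by positivity), ← ENNReal.ofReal_add (by positivity) (by positivity)]
          congr 1; ring
    exact absurd ht (not_lt.2 h2)
  have hm2 : Measurable (fun z : ℝ × ℝ => K1 (z.1 - z.2) * g z.2) := by fun_prop
  have hl3 : ENNReal.ofReal (l/3) ≠ 0 := by simpa using hl
  calc volume _ ≤ volume {t | ENNReal.ofReal (l/3) ≤ ∫⁻ s, K1 (t - s) * g s} := measure_mono hsub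
    _ ≤ (∫⁻ t, ∫⁻ s, K1 (t - s) * g s) / ENNReal.ofReal (l/3) := by
        apply meas_ge_le_lintegral_div _ hl3 (by simp)
        exact (Measurable.lintegral_prod_right (f := fun t s => K1 (t - s) * g s) hm2).aemeasurable
    _ = (∫⁻ s, ∫⁻ t, K1 (t - s) * g s) / ENNReal.ofReal (l/3) := by
        rw [lintegral_lintegral_swap hm2.aemeasurable]
    _ = (ENNReal.ofReal (R ^ (1-θ) / (1-θ)) * ∫⁻ s, g s) / ENNReal.ofReal (l/3) := by
        congr 1
        rw [← lintegral_const_mul _ hgm]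
        congr 1; ext s
        rw [lintegral_mul_const _ (by fun_prop), lintegral_sub_right_eq_self, hK1int]
    _ = _ := by
        have h1θ : 0 < 1 - θ := by linarith
        have hw : 0 < R ^ (1-θ) / (1-θ) := by positivity
        rw [← ha1, ENNReal.ofReal_mul ha.le, div_eq_mul_inv, ENNReal.mul_inv (by left; simpa using ha) (by left; simp)]
        rw [show ∀ w x y z : ℝ≥0∞, w * x * (y * z) = (w * z) * (y * x) by intros; ring]
        rw [ENNReal.mul_inv_cancel (by simpa using hw) (by simp), one_mul]

theorem hls_core (σ₀ σ₁ θ : ℝ) (h0 : 1 < σ₀) (h01 : σ₀ < σ₁) (hθ : θ < 1)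
    (hd : 1/σ₀ - 1/σ₁ = 1 - θ) : ∃ C : ℝ, 0 < C ∧ ∀ f : ℝ → ℝ≥0∞, Measurable f →
      ∫⁻ s, f s ^ σ₀ ≤ 1 → ∫⁻ t, (∫⁻ s, hlsK θ (t - s) * f s) ^ σ₁ ≤ ENNReal.ofReal C := by
  have hpq : σ₀.HolderConjugate (σ₀ / (σ₀ - 1)) := Real.HolderConjugate.conjExponent h0
  set q := σ₀ / (σ₀ - 1) with hq
  have hq0 : 0 < q := hpq.symm.pos
  have hq1 : 1 / q = 1 - 1/σ₀ := by
    have := hpq.inv_add_inv_eq_one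
    rw [one_div, one_div]; linarith
  have hs0 : 0 < σ₀ := by linarith
  have hs1 : 0 < σ₁ := by linarith
  have hσ1 : 0 < 1/σ₁ := by positivity
  have hθq : 0 < θ * q - 1 := by
    have : 1/q < θ := by linarith
    rw [div_lt_iff₀ hq0] at this; linarith
  have h1θ : 0 < 1 - θ := by linarith
  set c : ℝ := (θ*q-1) ^ (-(1/q)) with hc
  have hc0 : 0 < c := by positivity
  set b := σ₁ / σ₀ with hb
  have hb1 : 1 < b := by rw [hb, lt_div_iff₀ hs0]; linarith
  have hb2 : 1 + σ₁ * (1-θ) = b := by rw [← hd, hb]; field_simp; ring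
  have hbσ : 0 < σ₁ - b := by
    have : b < σ₁ := by rw [hb, div_lt_iff₀ hs0]; nlinarith
    linarith
  set d : ℝ := (1-θ)/3 * (3*c) ^ (-(σ₁*(1-θ))) with hdd
  have hd0 : 0 < d := by positivity
  set C : ℝ := σ₁ / d * (d⁻¹ ^ (σ₀ - 1) / (σ₁ - b)) with hC
  have hC0 : 0 < C := by positivity
  refine ⟨C, hC0, ?_⟩
  intro f hf hf1
  have hlev : ∀ l : ℝ, 0 < l → volume {t | ENNReal.ofReal l < ∫⁻ s, hlsK θ (t - s) * f s} ≤
      (ENNReal.ofReal (d * l ^ b))⁻¹ * ∫⁻ s, (if ENNReal.ofReal (d * l ^ b) < f s then f s else 0) := by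
    intro l hl
    apply hls_level σ₀ σ₁ θ h0 h01 hθ hd f hf hf1 l ((l / (3*c)) ^ (-σ₁)) (d * l ^ b) hl (by positivity) (by positivity)
    · apply le_of_eq
      rw [← hq, Real.div_rpow (by positivity) hθq.le, ← Real.rpow_mul (by positivity), ← Real.rpow_mul (by positivity)]
      have : -σ₁ * ((1 - θ*q) * (1/q)) = 1 := by
        have e : (1 - θ*q) * (1/q) = 1/q - θ := by field_simp
        rw [e, hq1]
        have : 1 - 1/σ₀ - θ = -(1/σ₁) := by linarith
        rw [this]; field_simp
      rw [this, Real.rpow_one, div_eq_mul_inv _ ((θ*q-1)^(1/q)), ← Real.rpow_neg hθq.le, ← hc]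
      field_simp
    · rw [← Real.rpow_mul (by positivity), ← hb2, Real.rpow_add hl, Real.rpow_one, hdd,
        Real.div_rpow hl.le (by positivity), neg_mul, Real.rpow_neg hl.le, Real.rpow_neg (by positivity)]
      have e1 : (3 * c) ^ (σ₁ * (1-θ)) ≠ 0 := by positivity
      have e2 : l ^ (σ₁ * (1-θ)) ≠ 0 := by positivity
      field_simp
  have hgm : Measurable (fun t => ∫⁻ s, hlsK θ (t - s) * f s) := by
    have hm2 : Measurable (fun z : ℝ × ℝ => hlsK θ (z.1 - z.2) * f z.2) := by
      have := hlsK_meas θ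
      fun_prop
    exact Measurable.lintegral_prod_right (f := fun t s => hlsK θ (t - s) * f s) hm2
  set G : ℝ → ℝ≥0∞ := fun t => ∫⁻ s, hlsK θ (t - s) * f s with hG
  have hffin : ∀ᵐ s, f s < ∞ := by
    have : ∀ᵐ s, f s ^ σ₀ < ∞ := ae_lt_top (hf.pow_const _) (ne_top_of_le_ne_top (by simp) hf1)
    filter_upwards [this] with s hs
    by_contra! h
    rw [top_le_iff.1 h, ENNReal.top_rpow_of_pos hs0] at hs
    exact lt_irrefl _ hs
  have hm3 : Measurable (fun z : ℝ × ℝ => if ENNReal.ofReal (d * z.1 ^ b) < f z.2 then f z.2 else 0) := by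
    apply Measurable.ite
    · exact measurableSet_lt (by fun_prop) (by fun_prop)
    · fun_prop
    · fun_prop
  calc ∫⁻ t, G t ^ σ₁ ≤ ∫⁻ t, ∫⁻ l in Set.Ioi (0:ℝ), (if ENNReal.ofReal l < G t then ENNReal.ofReal (σ₁ * l ^ (σ₁-1)) else 0) :=
        lintegral_mono fun t => layer σ₁ hs1 (G t)
    _ = ∫⁻ l in Set.Ioi (0:ℝ), ∫⁻ t, (if ENNReal.ofReal l < G t then ENNReal.ofReal (σ₁ * l ^ (σ₁-1)) else 0) := by
        apply lintegral_lintegral_swap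
        apply Measurable.aemeasurable
        apply Measurable.ite
        · exact measurableSet_lt (by fun_prop) (by fun_prop)
        · fun_prop
        · fun_prop
    _ ≤ ∫⁻ l in Set.Ioi (0:ℝ), ∫⁻ s, ENNReal.ofReal (σ₁/d * l ^ (σ₁-b-1)) * (if ENNReal.ofReal (d * l ^ b) < f s then f s else 0) := by
        apply setLIntegral_mono' measurableSet_Ioi
        intro l hl
        have hl : 0 < l := hl
        rw [lintegral_const_mul' _ _ (by simp)]
        have : ∀ t, (if ENNReal.ofReal l < G t then ENNReal.ofReal (σ₁ * l ^ (σ₁-1)) else 0) =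
          {t | ENNReal.ofReal l < G t}.indicator (fun _ => ENNReal.ofReal (σ₁ * l ^ (σ₁-1))) t := by
          intro t; simp [Set.indicator]
        simp_rw [this]
        rw [lintegral_indicator_const (measurableSet_lt measurable_const hgm)]
        calc _ ≤ ENNReal.ofReal (σ₁ * l ^ (σ₁-1)) * ((ENNReal.ofReal (d * l ^ b))⁻¹ * ∫⁻ s, (if ENNReal.ofReal (d * l ^ b) < f s then f s else 0)) := by
              gcongr; exact hlev l hl
          _ = _ := by
              rw [← mul_assoc, ← ENNReal.ofReal_inv_of_pos (by positivity), ← ENNReal.ofReal_mul (by positivity)]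
              congr 2
              rw [show σ₁ - b - 1 = (σ₁ - 1) - b by ring, Real.rpow_sub hl (σ₁-1) b]
              field_simp
    _ = ∫⁻ s, ∫⁻ l in Set.Ioi (0:ℝ), ENNReal.ofReal (σ₁/d * l ^ (σ₁-b-1)) * (if ENNReal.ofReal (d * l ^ b) < f s then f s else 0) := by
        apply lintegral_lintegral_swap
        apply Measurable.aemeasurable
        apply Measurable.mul (by fun_prop) hm3
    _ ≤ ∫⁻ s, ENNReal.ofReal C * f s ^ σ₀ := by
        apply lintegral_mono_ae
        filter_upwards [hffin] with s hs
        set F := (f s).toReal with hF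
        have hF0 : 0 ≤ F := ENNReal.toReal_nonneg
        have hfF : f s = ENNReal.ofReal F := (ENNReal.ofReal_toReal hs.ne).symm
        rw [hfF]
        have hsub : ∀ l ∈ Set.Ioi (0:ℝ), ENNReal.ofReal (σ₁/d * l ^ (σ₁-b-1)) * (if ENNReal.ofReal (d * l ^ b) < ENNReal.ofReal F then ENNReal.ofReal F else 0) ≤
            (Set.Ioo 0 ((F/d)^(1/b))).indicator (fun l => ENNReal.ofReal (σ₁/d * F) * ENNReal.ofReal (l ^ (σ₁-b-1))) l := by
          intro l hl
          have hl : 0 < l := hl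
          split_ifs with h
          · rw [Set.indicator_of_mem]
            · rw [← ENNReal.ofReal_mul (by positivity), ← ENNReal.ofReal_mul (by positivity)]
              apply le_of_eq; congr 1; ring
            · refine ⟨hl, ?_⟩
              rw [ENNReal.ofReal_lt_ofReal_iff'] at h
              have h1 : l ^ b < F / d := by rw [lt_div_iff₀ hd0]; linarith [h.1]
              calc l = (l ^ b) ^ (1/b) := by rw [← Real.rpow_mul hl.le]; field_simp; simp
                _ < _ := by apply Real.rpow_lt_rpow (by positivity) h1 (by positivity)
          · simp
        refine (setLIntegral_mono' measurableSet_Ioi hsub).trans ?_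
        refine (lintegral_mono' Measure.restrict_le_self le_rfl).trans ?_
        rw [lintegral_indicator measurableSet_Ioo, lintegral_const_mul' _ _ (by simp), lint_pow (σ₁ - b) _ hbσ (by positivity),
          ← ENNReal.ofReal_mul (by positivity), ENNReal.ofReal_rpow_of_nonneg hF0 hs0.le, ← ENNReal.ofReal_mul (by positivity)]
        apply le_of_eq; congr 1
        rw [← Real.rpow_mul (by positivity)]
        have e : 1 / b * (σ₁ - b) = σ₀ - 1 := by rw [hb]; field_simp
        rw [e, hC]
        rcases hF0.eq_or_lt with h | h
        · rw [← h]; simp [Real.zero_rpow hs0.ne']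
        · rw [div_eq_mul_inv F d, Real.mul_rpow hF0 (by positivity)]
          have : F ^ σ₀ = F * F ^ (σ₀ - 1) := by
            nth_rewrite 2 [← Real.rpow_one F]
            rw [← Real.rpow_add h]; congr 1; ring
          rw [this]; ring
    _ ≤ ENNReal.ofReal C := by
        rw [lintegral_const_mul' _ _ (by simp)]
        calc _ ≤ ENNReal.ofReal C * 1 := by gcongr
          _ = _ := mul_one _

theorem hls (σ₀ σ₁ θ : ℝ) (h0 : 1 < σ₀) (h01 : σ₀ < σ₁) (hθ : θ < 1)
    (hd : 1/σ₀ - 1/σ₁ = 1 - θ) : ∃ C : ℝ, 0 < C ∧ ∀ f : ℝ → ℝ≥0∞, Measurable f →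
      (∫⁻ t, (∫⁻ s, hlsK θ (t - s) * f s) ^ σ₁) ^ (1/σ₁) ≤ ENNReal.ofReal C * (∫⁻ s, f s ^ σ₀) ^ (1/σ₀) := by
  obtain ⟨C, hC, H⟩ := hls_core σ₀ σ₁ θ h0 h01 hθ hd
  have hs0 : 0 < σ₀ := by linarith
  have hs1 : 0 < σ₁ := by linarith
  refine ⟨C ^ (1/σ₁), by positivity, ?_⟩
  intro f hf
  set N := (∫⁻ s, f s ^ σ₀) ^ (1/σ₀) with hN
  have hNp : ∫⁻ s, f s ^ σ₀ = N ^ σ₀ := by rw [hN, ← ENNReal.rpow_mul]; simp [hs0.ne']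
  rcases eq_or_ne N 0 with h | hN0
  · rw [h, ENNReal.zero_rpow_of_pos hs0, lintegral_eq_zero_iff (hf.pow_const _)] at hNp
    have h2 : ∀ t, ∫⁻ s, hlsK θ (t - s) * f s = 0 := by
      intro t
      rw [lintegral_eq_zero_iff]
      · filter_upwards [hNp] with s hs
        simp [ENNReal.rpow_eq_zero_iff, hs0, hs0.le.not_gt] at hs
        simp [hs]
      · have := hlsK_meas θ
        fun_prop
    simp [h2, hs1]
  rcases eq_or_ne N ∞ with h | hNt
  · rw [h, ENNReal.mul_top (by simp; positivity)]; exact le_top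
  have hcore := H (fun s => N⁻¹ * f s) (by fun_prop) (by
    simp_rw [ENNReal.mul_rpow_of_nonneg _ _ hs0.le]
    rw [lintegral_const_mul _ (by fun_prop), hNp, ENNReal.inv_rpow, ENNReal.inv_mul_cancel]
    · simp [ENNReal.rpow_eq_zero_iff, hN0, hNt]
    · exact ENNReal.rpow_ne_top_of_nonneg hs0.le hNt)
  have e : ∀ t, ∫⁻ s, hlsK θ (t - s) * f s = N * ∫⁻ s, hlsK θ (t - s) * (N⁻¹ * f s) := by
    intro t
    rw [← lintegral_const_mul' _ _ hNt]
    congr 1; ext s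
    rw [show N * (hlsK θ (t-s) * (N⁻¹ * f s)) = (N * N⁻¹) * (hlsK θ (t-s) * f s) by ring,
      ENNReal.mul_inv_cancel hN0 hNt, one_mul]
  simp_rw [e, ENNReal.mul_rpow_of_nonneg _ _ hs1.le]
  rw [lintegral_const_mul' _ _ (ENNReal.rpow_ne_top_of_nonneg hs1.le hNt),
    ENNReal.mul_rpow_of_nonneg _ _ (by positivity), ← ENNReal.rpow_mul, mul_one_div_cancel hs1.ne', ENNReal.rpow_one, mul_comm,
    ← ENNReal.ofReal_rpow_of_nonneg hC.le (by positivity)]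
  gcongr

/-- scalar convolution -/
def cv (f g : Rn n → ℝ) : Rn n → ℝ :=
  MeasureTheory.convolution f g (ContinuousLinearMap.mul ℝ ℝ) volume

theorem cv_apply (f g : Rn n → ℝ) (x : Rn n) : cv f g x = ∫ y, f y * g (x - y) := rfl

structure Nice (f : Rn n → ℝ) : Prop where
  cont : Continuous f
  bdd : ∃ C : ℝ, ∀ x, |f x| ≤ C
  int : Integrable f

theorem Nice.bddAbove {f : Rn n → ℝ} (hf : Nice f) : BddAbove (Set.range fun x => ‖f x‖) := by
  obtain ⟨C, hC⟩ := hf.bdd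
  exact ⟨C, by rintro _ ⟨x, rfl⟩; exact hC x⟩

theorem Nice.ofSchwartz (f : SchwartzMap (Rn n) ℝ) : Nice (fun x => f x) := by
  refine ⟨f.continuous, ?_, f.integrable⟩
  obtain ⟨C, hC⟩ := f.decay 0 0
  exact ⟨C, fun x => by simpa using hC.2 x⟩

theorem Nice.norm {f : Rn n → ℝ} (hf : Nice f) : Nice (fun x => ‖f x‖) := by
  refine ⟨hf.cont.norm, ?_, hf.int.norm⟩
  obtain ⟨C, hC⟩ := hf.bdd
  exact ⟨C, fun x => by simpa using hC x⟩

theorem Nice.add {f g : Rn n → ℝ} (hf : Nice f) (hg : Nice g) : Nice (fun x => f x + g x) := by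
  refine ⟨hf.cont.add hg.cont, ?_, hf.int.add hg.int⟩
  obtain ⟨C, hC⟩ := hf.bdd
  obtain ⟨D, hD⟩ := hg.bdd
  exact ⟨C + D, fun x => (abs_add_le _ _).trans (add_le_add (hC x) (hD x))⟩

theorem Nice.cvInt {f g : Rn n → ℝ} (hf : Nice f) (hg : Nice g) (x : Rn n) :
    Integrable (fun y => f y * g (x - y)) := by
  obtain ⟨C, hC⟩ := hg.bdd
  apply hf.int.mul_bdd (c := C)
  · exact (hg.cont.comp (continuous_const.sub continuous_id)).aestronglyMeasurable
  · filter_upwards with y; exact hC _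

theorem Nice.exists {f g : Rn n → ℝ} (hf : Nice f) (hg : Nice g) (x : Rn n) :
    ConvolutionExistsAt f g x (ContinuousLinearMap.mul ℝ ℝ) volume := hf.cvInt hg x

theorem Nice.cv {f g : Rn n → ℝ} (hf : Nice f) (hg : Nice g) : Nice (cv f g) := by
  refine ⟨BddAbove.continuous_convolution_right_of_integrable _ hg.bddAbove hf.int hg.cont, ?_,
    hf.int.integrable_convolution _ hg.int⟩
  obtain ⟨C, hC⟩ := hg.bdd
  refine ⟨∫ y, |f y| * C, fun x => ?_⟩
  rw [cv_apply]
  refine (abs_integral_le_integral_abs).trans ?_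
  apply integral_mono (hf.cvInt hg x).abs (hf.int.abs.mul_const C)
  intro y
  simp only [abs_mul]
  gcongr
  exact hC _

theorem cv_comm (f g : Rn n → ℝ) : cv f g = cv g f := by
  ext x
  rw [cv_apply, cv_apply, ← integral_sub_left_eq_self _ volume x]
  simp [mul_comm]

theorem Nice.assoc {f g k : Rn n → ℝ} (hf : Nice f) (hg : Nice g) (hk : Nice k) :
    _root_.cv (_root_.cv f g) k = _root_.cv f (_root_.cv g k) := by
  ext x
  apply convolution_assoc
  · intros; simp [mul_assoc]
  · exact hf.cont.aestronglyMeasurable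
  · exact hg.cont.aestronglyMeasurable
  · exact hk.cont.aestronglyMeasurable
  · filter_upwards with y using hf.exists hg y
  · filter_upwards with y using hg.norm.exists hk.norm y
  · exact hf.norm.exists (hg.norm.cv hk.norm) x

theorem Nice.add_cv {f g k : Rn n → ℝ} (hf : Nice f) (hg : Nice g) (hk : Nice k) :
    _root_.cv (fun x => f x + g x) k = fun x => _root_.cv f k x + _root_.cv g k x := by
  ext x
  simp only [cv_apply, add_mul]
  exact integral_add (hf.cvInt hk x) (hg.cvInt hk x)

/-! dilations -/
def sc (c : ℝ) (f : Rn n → ℝ) (x : Rn n) : ℝ := f (c • x)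
def dl (c : ℝ) (f : Rn n → ℝ) (x : Rn n) : ℝ := c ^ n * f (c • x)

theorem Nice.sc {f : Rn n → ℝ} (hf : Nice f) {c : ℝ} (hc : 0 < c) : Nice (sc c f) := by
  refine ⟨hf.cont.comp (continuous_const_smul c), ?_, ?_⟩
  · obtain ⟨C, hC⟩ := hf.bdd
    exact ⟨C, fun x => hC _⟩
  · exact (integrable_comp_smul_iff volume f hc.ne').2 hf.int

theorem Nice.dl {f : Rn n → ℝ} (hf : Nice f) {c : ℝ} (hc : 0 < c) : Nice (dl c f) := by
  obtain ⟨h1, ⟨C, hC⟩, h3⟩ := hf.sc hc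
  refine ⟨continuous_const.mul h1, ⟨|c ^ n| * C, fun x => ?_⟩, h3.const_mul _⟩
  rw [_root_.dl, abs_mul]
  gcongr
  exact hC x

theorem int_dl (c : ℝ) (hc : 0 < c) (F : Rn n → ℝ) : ∫ y, c ^ n * F (c • y) = ∫ y, F y := by
  rw [integral_const_mul, Measure.integral_comp_smul]
  simp only [finrank_euclideanSpace, Fintype.card_fin, smul_eq_mul]
  rw [abs_of_pos (by positivity), ← mul_assoc, mul_inv_cancel₀ (by positivity), one_mul]

theorem cv_dl_apply (c : ℝ) (hc : 0 < c) (k f : Rn n → ℝ) (x : Rn n) :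
    cv (dl c k) f x = ∫ y, k y * f (x - c⁻¹ • y) := by
  rw [cv_apply, ← int_dl c hc (fun y => k y * f (x - c⁻¹ • y))]
  congr 1; ext y
  rw [dl, smul_smul, inv_mul_cancel₀ hc.ne', one_smul]; ring

theorem cv_dl_sc (c : ℝ) (hc : 0 < c) (k g : Rn n → ℝ) : cv (dl c k) (sc c g) = sc c (cv k g) := by
  ext x
  rw [cv_dl_apply c hc, sc, cv_apply]
  simp only [sc, smul_sub, smul_smul, mul_inv_cancel₀ hc.ne', one_smul]

theorem sc_sc (c : ℝ) (hc : 0 < c) (f : Rn n → ℝ) : sc c (sc c⁻¹ f) = f := by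
  ext x; simp [sc, smul_smul, hc.ne']

theorem dl_mul (c d : ℝ) (k : Rn n → ℝ) : dl c (dl d k) = dl (c * d) k := by
  ext x; simp only [dl, smul_smul, mul_pow, mul_comm d c, mul_assoc]

theorem lint_sc (c : ℝ) (hc : 0 < c) (F : Rn n → ℝ≥0∞) (hF : Measurable F) :
    ∫⁻ x, F (c • x) = ENNReal.ofReal ((c ^ n)⁻¹) * ∫⁻ x, F x := by
  have h := Measure.map_addHaar_smul (volume : Measure (Rn n)) hc.ne'
  have h2 : ∫⁻ x, F x ∂(Measure.map (c • ·) volume) = ∫⁻ x, F (c • x) :=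
    lintegral_map hF (measurable_const_smul c)
  rw [← h2, h, lintegral_smul_measure]
  simp only [finrank_euclideanSpace, Fintype.card_fin, smul_eq_mul]
  rw [abs_of_pos (by positivity)]

theorem eLpNorm_sc (c : ℝ) (hc : 0 < c) (f : Rn n → ℝ) (hf : Measurable f) (p : ℝ≥0∞) (hp : 1 ≤ p)
    (hp' : p < ∞) : eLpNorm (sc c f) p volume =
      ENNReal.ofReal (c ^ (-(n:ℝ) / p.toReal)) * eLpNorm f p volume := by
  have hp0 : p ≠ 0 := (lt_of_lt_of_le one_pos hp).ne'
  have hpr : 0 < p.toReal := ENNReal.toReal_pos hp0 hp'.ne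
  rw [eLpNorm_eq_lintegral_rpow_enorm_toReal hp0 hp'.ne, eLpNorm_eq_lintegral_rpow_enorm_toReal hp0 hp'.ne]
  simp only [sc]
  rw [lint_sc c hc (fun x => ‖f x‖ₑ ^ p.toReal) (by fun_prop), ENNReal.mul_rpow_of_nonneg _ _ (by positivity),
    ENNReal.ofReal_rpow_of_nonneg (by positivity) (by positivity)]
  congr 2
  rw [← Real.rpow_natCast, ← Real.rpow_neg hc.le, ← Real.rpow_mul hc.le]
  congr 1; ring

/-! norm inequalities -/
theorem cv_enorm_le (f g : Rn n → ℝ) (x : Rn n) : ‖cv f g x‖ₑ ≤ ∫⁻ y, ‖f y‖ₑ * ‖g (x - y)‖ₑ := by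
  rw [cv_apply]
  refine (enorm_integral_le_lintegral_enorm _).trans ?_
  simp [enorm_mul]

theorem young1 (f g : Rn n → ℝ) (hf : Measurable f) (hg : Measurable g) (p : ℝ≥0∞) (hp : 1 ≤ p)
    (hp' : p < ∞) : eLpNorm (cv f g) p volume ≤ (∫⁻ y, ‖f y‖ₑ) * eLpNorm g p volume := by
  have hp0 : p ≠ 0 := (lt_of_lt_of_le one_pos hp).ne'
  have hp1 : 1 ≤ p.toReal := by
    rw [← ENNReal.toReal_one]; exact ENNReal.toReal_mono hp'.ne hp
  rw [eLpNorm_eq_lintegral_rpow_enorm_toReal hp0 hp'.ne, eLpNorm_eq_lintegral_rpow_enorm_toReal hp0 hp'.ne]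
  set r := p.toReal
  calc (∫⁻ x, ‖cv f g x‖ₑ ^ r) ^ (1/r) ≤ (∫⁻ x, (∫⁻ y, ‖f y‖ₑ * ‖g (x - y)‖ₑ) ^ r) ^ (1/r) := by
        gcongr with x; exact cv_enorm_le f g x
    _ ≤ ∫⁻ y, (∫⁻ x, (‖f y‖ₑ * ‖g (x - y)‖ₑ) ^ r) ^ (1/r) := by
        apply mink volume volume (fun y x => ‖f y‖ₑ * ‖g (x - y)‖ₑ) _ r hp1
        have : Measurable (fun z : Rn n × Rn n => ‖f z.1‖ₑ * ‖g (z.2 - z.1)‖ₑ) := by fun_prop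
        exact this
    _ = ∫⁻ y, ‖f y‖ₑ * (∫⁻ x, ‖g x‖ₑ ^ r) ^ (1/r) := by
        congr 1; ext y
        simp_rw [ENNReal.mul_rpow_of_nonneg _ _ (by positivity : 0 ≤ r)]
        rw [lintegral_const_mul _ (by fun_prop), lintegral_sub_right_eq_self (fun x => ‖g x‖ₑ ^ r),
          ENNReal.mul_rpow_of_nonneg _ _ (by positivity), ← ENNReal.rpow_mul,
          mul_one_div_cancel (by positivity), ENNReal.rpow_one]
    _ = _ := by rw [lintegral_mul_const _ (by fun_prop)]

theorem holder_sup (f : Rn n → ℝ) (hf : Nice f) (p : ℝ≥0∞) (hp : 1 ≤ p) (hp' : p < ∞) :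
    ∃ B : ℝ≥0∞, B ≠ ∞ ∧ ∀ g : Rn n → ℝ, Measurable g → ∀ x,
      ∫⁻ y, ‖f y‖ₑ * ‖g (x - y)‖ₑ ≤ B * eLpNorm g p volume := by
  have hp0 : p ≠ 0 := (lt_of_lt_of_le one_pos hp).ne'
  have hp1 : 1 ≤ p.toReal := by
    rw [← ENNReal.toReal_one]; exact ENNReal.toReal_mono hp'.ne hp
  obtain ⟨C, hC⟩ := hf.bdd
  have hC' : ∀ y, ‖f y‖ₑ ≤ ENNReal.ofReal C := fun y => by
    rw [← ofReal_norm]; exact ENNReal.ofReal_le_ofReal (hC y)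
  have hfm : Measurable f := hf.cont.measurable
  rcases hp1.eq_or_lt with h | h
  · refine ⟨ENNReal.ofReal C, by simp, fun g hg x => ?_⟩
    rw [eLpNorm_eq_lintegral_rpow_enorm_toReal hp0 hp'.ne, ← h]
    simp only [ENNReal.rpow_one, div_one]
    rw [← lintegral_sub_left_eq_self (fun y => ‖g y‖ₑ) x, ← lintegral_const_mul _ (by fun_prop)]
    gcongr with y
    exact hC' y
  · have hpq : p.toReal.HolderConjugate (p.toReal / (p.toReal - 1)) := Real.HolderConjugate.conjExponent h
    set q := p.toReal / (p.toReal - 1) with hq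
    have hq0 : 0 < q := hpq.symm.pos
    have hq1 : 1 < q := hpq.symm.lt
    refine ⟨(∫⁻ y, ‖f y‖ₑ ^ q) ^ (1/q), ?_, fun g hg x => ?_⟩
    · apply ENNReal.rpow_ne_top_of_nonneg (by positivity)
      have : ∫⁻ y, ‖f y‖ₑ ^ q ≤ ∫⁻ y, ENNReal.ofReal C ^ (q-1) * ‖f y‖ₑ := by
        apply lintegral_mono; intro y
        calc ‖f y‖ₑ ^ q = ‖f y‖ₑ ^ (q-1) * ‖f y‖ₑ := by
              nth_rewrite 3 [← ENNReal.rpow_one ‖f y‖ₑ]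
              rw [← ENNReal.rpow_add_of_nonneg _ _ (by linarith) (by norm_num)]
              congr 1; ring
          _ ≤ _ := mul_le_mul_left (ENNReal.rpow_le_rpow (hC' y) (by linarith)) _
      refine ne_top_of_le_ne_top ?_ this
      rw [lintegral_const_mul _ (by fun_prop)]
      apply ENNReal.mul_ne_top
      · exact ENNReal.rpow_ne_top_of_nonneg (by linarith) (by simp)
      · exact hf.int.2.ne
    · rw [eLpNorm_eq_lintegral_rpow_enorm_toReal hp0 hp'.ne,
        ← lintegral_sub_left_eq_self (fun y => ‖g y‖ₑ ^ p.toReal) x]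
      exact ENNReal.lintegral_mul_le_Lp_mul_Lq volume hpq.symm (by fun_prop) (by fun_prop)

/-- Bernstein at unit scale -/
theorem bernst (f : Rn n → ℝ) (hf : Nice f) (p₀ p₁ : ℝ≥0∞) (hp₀ : 1 ≤ p₀) (hp₀₁ : p₀ ≤ p₁)
    (hp₁ : p₁ < ∞) : ∃ A : ℝ≥0∞, A ≠ ∞ ∧ ∀ g : Rn n → ℝ, Measurable g →
      eLpNorm (cv f g) p₁ volume ≤ A * eLpNorm g p₀ volume := by
  have hp0' : p₀ < ∞ := lt_of_le_of_lt hp₀₁ hp₁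
  obtain ⟨B, hB, H⟩ := holder_sup f hf p₀ hp₀ hp0'
  refine ⟨max B (∫⁻ y, ‖f y‖ₑ), by simp [hB, hf.int.2.ne], fun g hg => ?_⟩
  set A := max B (∫⁻ y, ‖f y‖ₑ) with hA
  have hz0 : p₀ ≠ 0 := (lt_of_lt_of_le one_pos hp₀).ne'
  have hz1 : p₁ ≠ 0 := (lt_of_lt_of_le one_pos (hp₀.trans hp₀₁)).ne'
  have h1 : ∀ x, ‖cv f g x‖ₑ ≤ A * eLpNorm g p₀ volume := fun x =>
    (cv_enorm_le f g x).trans ((H g hg x).trans (by gcongr; exact le_max_left _ _))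
  have h2 : eLpNorm (cv f g) p₀ volume ≤ A * eLpNorm g p₀ volume :=
    (young1 f g hf.cont.measurable hg p₀ hp₀ hp0').trans (by gcongr; exact le_max_right _ _)
  set W := A * eLpNorm g p₀ volume with hW
  have hr0 : 0 < p₀.toReal := ENNReal.toReal_pos hz0 hp0'.ne
  have hr01 : p₀.toReal ≤ p₁.toReal := ENNReal.toReal_mono hp₁.ne hp₀₁
  have hr1 : 0 < p₁.toReal := by linarith
  rw [eLpNorm_eq_lintegral_rpow_enorm_toReal hz0 hp0'.ne] at h2
  rw [eLpNorm_eq_lintegral_rpow_enorm_toReal hz1 hp₁.ne]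
  have h3 : ∫⁻ x, ‖cv f g x‖ₑ ^ p₀.toReal ≤ W ^ p₀.toReal := by
    calc _ = ((∫⁻ x, ‖cv f g x‖ₑ ^ p₀.toReal) ^ (1/p₀.toReal)) ^ p₀.toReal := by
          rw [← ENNReal.rpow_mul]; simp [hr0.ne']
      _ ≤ _ := by gcongr
  rcases eq_or_ne W ∞ with hWt | hWt
  · rw [hWt]; exact le_top
  have h4 : ∫⁻ x, ‖cv f g x‖ₑ ^ p₁.toReal ≤ W ^ p₁.toReal := by
    calc _ ≤ ∫⁻ x, W ^ (p₁.toReal - p₀.toReal) * ‖cv f g x‖ₑ ^ p₀.toReal := by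
          apply lintegral_mono; intro x
          calc ‖cv f g x‖ₑ ^ p₁.toReal = ‖cv f g x‖ₑ ^ (p₁.toReal - p₀.toReal) * ‖cv f g x‖ₑ ^ p₀.toReal := by
                rw [← ENNReal.rpow_add_of_nonneg _ _ (by linarith) hr0.le]; congr 1; ring
            _ ≤ _ := mul_le_mul_left (ENNReal.rpow_le_rpow (h1 x) (by linarith)) _
      _ = W ^ (p₁.toReal - p₀.toReal) * ∫⁻ x, ‖cv f g x‖ₑ ^ p₀.toReal := by
          rw [lintegral_const_mul' _ _ (ENNReal.rpow_ne_top_of_nonneg (by linarith) hWt)]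
      _ ≤ W ^ (p₁.toReal - p₀.toReal) * W ^ p₀.toReal := by gcongr
      _ = _ := by
          rw [← ENNReal.rpow_add_of_nonneg _ _ (by linarith) hr0.le]; congr 1; ring
  calc _ ≤ (W ^ p₁.toReal) ^ (1/p₁.toReal) := by gcongr
    _ = W := by rw [← ENNReal.rpow_mul]; simp [hr1.ne']

def ftR (f : Rn n → ℝ) : Rn n → ℂ := 𝓕 (fun x => (f x : ℂ))

theorem ftR_eq (f : Rn n → ℝ) (ξ : Rn n) : ftR f ξ = ∫ x, 𝐞 (-inner ℝ x ξ) • (f x : ℂ) := by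
  rw [ftR, Real.fourier_eq]

theorem ftR_cv {f g : Rn n → ℝ} (hf : Nice f) (hg : Nice g) (ξ : Rn n) :
    ftR (cv f g) ξ = ftR f ξ * ftR g ξ := by
  have h := Real.fourier_mul_convolution_eq (f₁ := fun x => (f x:ℂ)) (f₂ := fun x => (g x:ℂ)) hf.int.ofReal hg.int.ofReal ξ
  refine Eq.trans ?_ h
  have e : (fun x => ((cv f g x : ℝ) : ℂ)) = convolution (fun x => (f x:ℂ)) (fun x => (g x:ℂ)) (ContinuousLinearMap.mul ℂ ℂ) volume := ?_
  · rw [ftR, e]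
  ext x
  rw [cv_apply, ← integral_complex_ofReal]
  simp [convolution_def]

theorem ftR_add {f g : Rn n → ℝ} (hf : Nice f) (hg : Nice g) (ξ : Rn n) :
    ftR (fun x => f x + g x) ξ = ftR f ξ + ftR g ξ := by
  rw [ftR_eq, ftR_eq, ftR_eq, ← integral_add]
  · congr 1; ext x; push_cast; rw [smul_add]
  · exact (Real.fourierIntegral_convergent_iff ξ).2 hf.int.ofReal
  · exact (Real.fourierIntegral_convergent_iff ξ).2 hg.int.ofReal

theorem ftR_dl (f : Rn n → ℝ) {c : ℝ} (hc : 0 < c) (ξ : Rn n) :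
    ftR (dl c f) ξ = ftR f (c⁻¹ • ξ) := by
  rw [ftR_eq, ftR_eq]
  have := Measure.integral_comp_smul (volume : Measure (Rn n)) (fun x => 𝐞 (-inner ℝ x (c⁻¹ • ξ)) • (f x : ℂ)) c
  simp only [finrank_euclideanSpace, Fintype.card_fin] at this
  rw [abs_of_pos (by positivity)] at this
  have h2 : ∀ x : Rn n, 𝐞 (-inner ℝ x ξ) • ((dl c f x : ℝ) : ℂ) =
      (c ^ n) • (𝐞 (-inner ℝ (c • x) (c⁻¹ • ξ)) • (f (c • x) : ℂ)) := by
    intro x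
    rw [inner_smul_left, inner_smul_right]
    simp only [conj_trivial]
    rw [← mul_assoc, mul_inv_cancel₀ hc.ne', one_mul, smul_comm, dl]
    push_cast
    rw [Complex.real_smul]; push_cast; rfl
  simp only [h2]
  rw [integral_smul, this, smul_smul, mul_inv_cancel₀ (by positivity), one_smul]

theorem ft_inj {f g : Rn n → ℝ} (hf : Nice f) (hg : Nice g) (h : ∀ ξ, ftR f ξ = ftR g ξ) : f = g := by
  have hd : 𝓕 (fun x => ((f x : ℂ) - (g x : ℂ))) = fun _ : Rn n => (0:ℂ) := by
    ext ξ
    have := h ξ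
    rw [ftR_eq, ftR_eq, ← sub_eq_zero, ← integral_sub] at this
    · rw [Real.fourier_eq, ← this]
      congr 1; ext x; rw [smul_sub]
    · exact (Real.fourierIntegral_convergent_iff ξ).2 hf.int.ofReal
    · exact (Real.fourierIntegral_convergent_iff ξ).2 hg.int.ofReal
  have hi := Continuous.fourierInv_fourier_eq (f := fun x => ((f x : ℂ) - (g x : ℂ)))
    ((Complex.continuous_ofReal.comp hf.cont).sub (Complex.continuous_ofReal.comp hg.cont))
    (hf.int.ofReal.sub hg.int.ofReal) (by rw [hd]; exact integrable_zero _ _ _)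
  rw [hd] at hi
  ext x
  have h2 := congrFun hi x
  rw [Real.fourierInv_eq] at h2
  simp only [smul_zero, integral_zero] at h2
  exact_mod_cast (sub_eq_zero.1 h2.symm)


section LP
variable {ψ₀ Ψ : SchwartzMap (Rn n) ℝ}

theorem ftC_ftR (f : SchwartzMap (Rn n) ℝ) : ftC f = ftR (fun x => f x) := rfl

theorem phi_zero (hψ : IsLPF n ψ₀) (ξ : Rn n) (h : ‖ξ‖ ≤ 1/2 ∨ 2 ≤ ‖ξ‖) : ftC ψ₀ ξ = 0 := by
  by_contra hne
  have := hψ.ft_supp ξ hne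
  rcases h with h | h <;> linarith [this.1, this.2]

theorem norm_zp (j : ℤ) (ξ : Rn n) : ‖(2:ℝ) ^ j • ξ‖ = (2:ℝ) ^ j * ‖ξ‖ := by
  rw [norm_smul, Real.norm_of_nonneg (by positivity)]

theorem key1 (hψ : IsLPF n ψ₀) (ξ : Rn n) (h1 : 1/2 < ‖ξ‖) (h2 : ‖ξ‖ < 2) :
    ftC ψ₀ ξ + ftC ψ₀ ((2:ℝ)⁻¹ • ξ) + ftC ψ₀ ((2:ℝ) • ξ) = 1 := by
  have hne : ξ ≠ 0 := by rintro rfl; simp at h1; linarith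
  have hs := hψ.ft_sum ξ hne
  have hs2 : HasSum (fun j : ℤ => ftC ψ₀ ((2:ℝ) ^ (-j) • ξ))
      (∑ j ∈ ({0, 1, -1} : Finset ℤ), ftC ψ₀ ((2:ℝ) ^ (-j) • ξ)) := by
    apply hasSum_sum_of_ne_finset_zero
    intro j hj
    apply phi_zero hψ
    rw [norm_zp]
    simp only [Finset.mem_insert, Finset.mem_singleton, not_or] at hj
    have : j ≤ -2 ∨ 2 ≤ j := by omega
    rcases this with h | h
    · right
      have : (2:ℝ) ^ (2:ℤ) ≤ 2 ^ (-j) := zpow_le_zpow_right₀ (by norm_num) (by omega)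
      norm_num at this ⊢
      nlinarith
    · left
      have : (2:ℝ) ^ (-j) ≤ 2 ^ (-2:ℤ) := zpow_le_zpow_right₀ (by norm_num) (by omega)
      norm_num at this ⊢
      nlinarith
  have := hs2.unique hs
  rw [Finset.sum_insert (by decide), Finset.sum_insert (by decide), Finset.sum_singleton] at this
  rw [← this]
  norm_num [add_assoc]

theorem summ (hψ : IsLPF n ψ₀) (ξ : Rn n) :
    Summable (fun k : ℕ => ftC ψ₀ ((2:ℝ) ^ (-(k:ℤ)) • ξ)) := by
  by_cases hne : ξ = 0
  · subst hne
    simp only [smul_zero, phi_zero hψ (0 : Rn n) (by left; simp)]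
    exact summable_zero
  · exact (hψ.ft_sum ξ hne).summable.comp_injective (i := fun k : ℕ => (k:ℤ)) Nat.cast_injective

theorem key2 (hψ : IsLPF n ψ₀) (hΨ : IsLowPiece ψ₀ Ψ) (ξ : Rn n) (h : 1 ≤ ‖ξ‖) : ftC Ψ ξ = 0 := by
  have hne : ξ ≠ 0 := by rintro rfl; simp at h; linarith
  have hs := hψ.ft_sum ξ hne
  have : HasSum (fun k : ℕ => ftC ψ₀ ((2:ℝ) ^ (-(k:ℤ)) • ξ)) 1 := by
    refine (Function.Injective.hasSum_iff (g := fun k : ℕ => (k:ℤ)) Nat.cast_injective ?_).2 hs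
    intro j hj
    apply phi_zero hψ
    right
    rw [norm_zp]
    have hj' : j ≤ -1 := by
      by_contra hcon
      exact hj ⟨j.toNat, by simp; omega⟩
    have : (2:ℝ) ^ (1:ℤ) ≤ 2 ^ (-j) := zpow_le_zpow_right₀ (by norm_num) (by omega)
    norm_num at this ⊢
    nlinarith
  rw [hΨ ξ, this.tsum_eq, sub_self]

theorem key3 (hψ : IsLPF n ψ₀) (hΨ : IsLowPiece ψ₀ Ψ) (ξ : Rn n) :
    ftC Ψ ((2:ℝ)⁻¹ • ξ) = ftC Ψ ξ + ftC ψ₀ ξ := by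
  rw [hΨ, hΨ ξ, (summ hψ ξ).tsum_eq_zero_add]
  have : ∀ k : ℕ, (2:ℝ) ^ (-(k:ℤ)) • (2:ℝ)⁻¹ • ξ = (2:ℝ) ^ (-((k+1 : ℕ):ℤ)) • ξ := by
    intro k
    rw [smul_smul]
    congr 1
    push_cast
    rw [neg_add, zpow_add₀ (by norm_num)]; norm_num
  simp only [this]
  simp only [Nat.cast_zero, neg_zero, zpow_zero, one_smul]
  ring

theorem key4 (hψ : IsLPF n ψ₀) (hΨ : IsLowPiece ψ₀ Ψ) (ξ : Rn n) (h : ‖ξ‖ ≤ 1/2) :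
    ftC Ψ ξ = 1 := by
  rw [hΨ]
  have : ∀ k : ℕ, ftC ψ₀ ((2:ℝ) ^ (-(k:ℤ)) • ξ) = 0 := by
    intro k
    apply phi_zero hψ
    left
    rw [norm_zp]
    have : (2:ℝ) ^ (-(k:ℤ)) ≤ 2 ^ (0:ℤ) := zpow_le_zpow_right₀ (by norm_num) (by omega)
    norm_num at this ⊢
    nlinarith [norm_nonneg ξ]
  simp only [this, tsum_zero, sub_zero]

def psiT (ψ₀ : SchwartzMap (Rn n) ℝ) (x : Rn n) : ℝ :=
  (ψ₀ x + dl 2 (fun x => ψ₀ x) x) + dl (2⁻¹) (fun x => ψ₀ x) x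

theorem nice_psiT (ψ₀ : SchwartzMap (Rn n) ℝ) : Nice (psiT ψ₀) :=
  ((Nice.ofSchwartz ψ₀).add ((Nice.ofSchwartz ψ₀).dl (by norm_num))).add ((Nice.ofSchwartz ψ₀).dl (by norm_num))

theorem ft_psiT (ψ₀ : SchwartzMap (Rn n) ℝ) (ξ : Rn n) : ftR (psiT ψ₀) ξ =
    ftC ψ₀ ξ + ftC ψ₀ ((2:ℝ)⁻¹ • ξ) + ftC ψ₀ ((2:ℝ) • ξ) := by
  have h := Nice.ofSchwartz ψ₀
  have e : psiT ψ₀ = fun x => (ψ₀ x + dl 2 (fun x => ψ₀ x) x) + dl (2⁻¹) (fun x => ψ₀ x) x := rfl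
  rw [e, ftR_add (h.add (h.dl (by norm_num))) (h.dl (by norm_num)), ftR_add h (h.dl (by norm_num)),
    ftR_dl _ (by norm_num), ftR_dl _ (by norm_num), inv_inv]
  rfl

theorem lemA (hψ : IsLPF n ψ₀) : cv (psiT ψ₀) (fun x => ψ₀ x) = fun x => ψ₀ x := by
  apply ft_inj ((nice_psiT ψ₀).cv (Nice.ofSchwartz ψ₀)) (Nice.ofSchwartz ψ₀)
  intro ξ
  rw [ftR_cv (nice_psiT ψ₀) (Nice.ofSchwartz ψ₀), ft_psiT, ← ftC_ftR]
  by_cases h : 1/2 < ‖ξ‖ ∧ ‖ξ‖ < 2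
  · rw [key1 hψ ξ h.1 h.2, one_mul]
  · have : ftC ψ₀ ξ = 0 := by by_contra hne; exact h (hψ.ft_supp ξ hne)
    rw [this, mul_zero]

theorem lemC (hψ : IsLPF n ψ₀) (hΨ : IsLowPiece ψ₀ Ψ) :
    dl 2 (fun x => Ψ x) = fun x => Ψ x + ψ₀ x := by
  apply ft_inj ((Nice.ofSchwartz Ψ).dl (by norm_num)) ((Nice.ofSchwartz Ψ).add (Nice.ofSchwartz ψ₀))
  intro ξ
  rw [ftR_add (Nice.ofSchwartz Ψ) (Nice.ofSchwartz ψ₀), ftR_dl _ (by norm_num)]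
  exact key3 hψ hΨ ξ

theorem lemB (hψ : IsLPF n ψ₀) (hΨ : IsLowPiece ψ₀ Ψ) :
    cv (dl 2 (fun x => Ψ x)) (fun x => Ψ x) = fun x => Ψ x := by
  have h := Nice.ofSchwartz Ψ
  apply ft_inj ((h.dl (by norm_num)).cv h) h
  intro ξ
  rw [ftR_cv (h.dl (by norm_num)) h, ftR_dl _ (by norm_num), ← ftC_ftR]
  by_cases hx : ‖ξ‖ < 1
  · rw [key4 hψ hΨ, one_mul]
    rw [norm_smul]; norm_num; linarith
  · rw [key2 hψ hΨ ξ (by linarith), mul_zero]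

theorem ftR_zero (f : Rn n → ℝ) : ftR f 0 = ((∫ x, f x : ℝ) : ℂ) := by
  rw [ftR_eq, ← integral_complex_ofReal]; simp

theorem int_psiT (hψ : IsLPF n ψ₀) : ∫ x, psiT ψ₀ x = 0 := by
  have h := ft_psiT ψ₀ 0
  rw [ftR_zero] at h
  simp only [smul_zero, phi_zero hψ (0 : Rn n) (by left; simp), add_zero] at h
  exact_mod_cast h

theorem int_Psi (hψ : IsLPF n ψ₀) (hΨ : IsLowPiece ψ₀ Ψ) : ∫ x, Ψ x = 1 := by
  have h := ftR_zero (fun x => Ψ x)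
  rw [← ftC_ftR, key4 hψ hΨ 0 (by simp)] at h
  exact_mod_cast h.symm

theorem psiT_even (hψ : IsLPF n ψ₀) (x : Rn n) : psiT ψ₀ (-x) = psiT ψ₀ x := by
  simp [psiT, dl, hψ.even]

theorem mom_schwartz (f : SchwartzMap (Rn n) ℝ) : Integrable (fun x => ‖x‖ ^ 2 * ‖f x‖) :=
  f.integrable_pow_mul volume 2

theorem mom_dl {f : Rn n → ℝ} (h : Integrable (fun x => ‖x‖ ^ 2 * ‖f x‖)) {c : ℝ} (hc : 0 < c) :
    Integrable (fun x => ‖x‖ ^ 2 * ‖dl c f x‖) := by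
  have h2 := ((integrable_comp_smul_iff volume _ hc.ne').2 h).const_mul (c ^ n * (c ^ 2)⁻¹)
  refine h2.congr (ae_of_all _ fun x => ?_)
  simp only [dl, norm_mul, norm_smul, Real.norm_of_nonneg hc.le, norm_pow]
  field_simp

theorem mom_psiT (ψ₀ : SchwartzMap (Rn n) ℝ) : Integrable (fun x => ‖x‖ ^ 2 * ‖psiT ψ₀ x‖) := by
  have h1 := mom_schwartz ψ₀
  have h2 := mom_dl h1 (c := 2) (by norm_num)
  have h3 := mom_dl h1 (c := 2⁻¹) (by norm_num)
  refine ((h1.add h2).add h3).mono' ?_ (ae_of_all _ fun x => ?_)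
  · exact ((continuous_norm.pow 2).mul (nice_psiT ψ₀).cont.norm).aestronglyMeasurable
  · rw [Real.norm_of_nonneg (by positivity)]
    simp only [Pi.add_apply, ← mul_add]
    gcongr
    exact norm_add₃_le

theorem lpK (ψ₀ : SchwartzMap (Rn n) ℝ) (j : ℤ) : lpKernel ψ₀ j = dl ((2:ℝ) ^ j) (fun x => ψ₀ x) := by
  ext x; rw [lpKernel, dl, zpow_mul, zpow_natCast]

theorem lpP (ψ₀ : SchwartzMap (Rn n) ℝ) (j : ℤ) (f : Rn n → ℝ) :
    lpProj ψ₀ j f = cv (dl ((2:ℝ) ^ j) (fun x => ψ₀ x)) f := by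
  rw [← lpK]; rfl

theorem nice_lpK (ψ₀ : SchwartzMap (Rn n) ℝ) (j : ℤ) : Nice (dl ((2:ℝ) ^ j) (fun x => ψ₀ x)) :=
  (Nice.ofSchwartz ψ₀).dl (by positivity)

/-- telescoping -/
theorem tele (hψ : IsLPF n ψ₀) (hΨ : IsLowPiece ψ₀ Ψ) (N : ℕ) :
    dl ((2:ℝ) ^ N) (fun x => Ψ x) =
      fun x => Ψ x + ∑ j ∈ Finset.range N, dl ((2:ℝ) ^ (j:ℤ)) (fun x => ψ₀ x) x := by
  induction N with
  | zero => ext x; simp [dl]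
  | succ N ih =>
    rw [pow_succ, ← dl_mul, lemC hψ hΨ]
    ext x
    rw [Finset.sum_range_succ, ← add_assoc]
    have := congrFun ih x
    rw [← this]
    simp only [dl, zpow_natCast]; ring

end LP

def hk (n : ℕ) (τ : ℝ) (x : Rn n) : ℝ := (4 * π * τ) ^ (-(n:ℝ)/2) * Real.exp (-‖x‖^2 / (4*τ))

theorem heatOp_eq (t : ℝ) (f : Rn n → ℝ) : heatOp n t f = cv (hk n t) f := rfl

theorem hk_nonneg {τ : ℝ} (hτ : 0 < τ) (x : Rn n) : 0 ≤ hk n τ x := by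
  unfold hk; positivity

theorem hk_integral {τ : ℝ} (hτ : 0 < τ) : ∫ x, hk n τ x = 1 := by
  unfold hk
  rw [integral_const_mul]
  have := GaussianFourier.integral_rexp_neg_mul_sq_norm (V := Rn n) (b := 1/(4*τ)) (by positivity)
  have e : ∀ x : Rn n, Real.exp (-‖x‖^2 / (4*τ)) = Real.exp (-(1/(4*τ)) * ‖x‖^2) := by
    intro x; congr 1; field_simp
  simp only [e, this, finrank_euclideanSpace, Fintype.card_fin]
  have : π / (1/(4*τ)) = 4*π*τ := by field_simp
  rw [this, ← Real.rpow_add (by positivity)]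
  rw [neg_div, neg_add_cancel, Real.rpow_zero]

theorem hk_int {τ : ℝ} (hτ : 0 < τ) : Integrable (hk n τ) := by
  by_contra h
  have := hk_integral (n := n) hτ
  rw [integral_undef h] at this
  norm_num at this

theorem hk_cont (τ : ℝ) : Continuous (hk n τ) := by
  unfold hk; fun_prop

theorem hk_nice {τ : ℝ} (hτ : 0 < τ) : Nice (hk n τ) := by
  refine ⟨hk_cont τ, ⟨(4 * π * τ) ^ (-(n:ℝ)/2), fun x => ?_⟩, hk_int hτ⟩
  rw [abs_of_nonneg (hk_nonneg hτ x), hk]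
  have : Real.exp (-‖x‖^2 / (4*τ)) ≤ 1 := by
    rw [Real.exp_le_one_iff, neg_div]
    have : 0 ≤ ‖x‖^2 / (4*τ) := by positivity
    linarith
  have h2 : (0:ℝ) ≤ (4 * π * τ) ^ (-(n:ℝ)/2) := by positivity
  nlinarith

theorem hk_lint {τ : ℝ} (hτ : 0 < τ) : ∫⁻ x, ‖hk n τ x‖ₑ = 1 := by
  have := ofReal_integral_eq_lintegral_ofReal (hk_int (n := n) hτ) (ae_of_all _ (hk_nonneg hτ))
  rw [hk_integral hτ, ENNReal.ofReal_one] at this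
  rw [this]
  congr 1; ext x
  exact Real.enorm_eq_ofReal (hk_nonneg hτ x)

theorem hk_dl {τ c : ℝ} (hτ : 0 < τ) (hc : 0 < c) : hk n τ = dl c (hk n (c^2*τ)) := by
  ext x
  simp only [hk, dl, norm_smul, Real.norm_of_nonneg hc.le]
  have h1 : 4 * π * (c^2*τ) = c^2 * (4*π*τ) := by ring
  have h2 : (c^2 : ℝ) ^ (-(n:ℝ)/2) = (c^n)⁻¹ := by
    rw [← Real.rpow_natCast c 2, ← Real.rpow_mul hc.le, ← Real.rpow_natCast c n, ← Real.rpow_neg hc.le]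
    congr 1; push_cast; ring
  rw [h1, Real.mul_rpow (x := c^2) (by positivity) (by positivity), h2, ← mul_assoc, ← mul_assoc,
    mul_inv_cancel₀ (by positivity), one_mul]
  congr 2
  field_simp

theorem hk_even (τ : ℝ) (x : Rn n) : hk n τ (-x) = hk n τ x := by simp [hk]

theorem hk_low {τ : ℝ} (hτ : 0 < τ) (x y : Rn n) :
    2 * Real.exp (-‖y‖^2/(4*τ)) * hk n τ x ≤ hk n τ (x - y) + hk n τ (x + y) := by
  simp only [hk]
  have h1 := norm_sub_sq_real x y
  have h2 := norm_add_sq_real x y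
  set w := (inner ℝ x y : ℝ) with hw
  rw [h1, h2]
  have e1 : -(‖x‖^2 - 2*w + ‖y‖^2)/(4*τ) = -‖y‖^2/(4*τ) + -‖x‖^2/(4*τ) + w/(2*τ) := by field_simp; ring
  have e2 : -(‖x‖^2 + 2*w + ‖y‖^2)/(4*τ) = -‖y‖^2/(4*τ) + -‖x‖^2/(4*τ) + -(w/(2*τ)) := by field_simp; ring
  rw [e1, e2, Real.exp_add _ (w/(2*τ)), Real.exp_add _ (-(w/(2*τ))), Real.exp_add]
  have h3 : 2 ≤ Real.exp (w/(2*τ)) + Real.exp (-(w/(2*τ))) := by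
    have := Real.one_le_cosh (w/(2*τ))
    rw [Real.cosh_eq] at this; linarith
  have h4 : 0 ≤ (4 * π * τ) ^ (-(n:ℝ)/2) * (Real.exp (-‖y‖^2/(4*τ)) * Real.exp (-‖x‖^2/(4*τ))) := by positivity
  nlinarith [mul_le_mul_of_nonneg_left h3 h4]

def hkE (τ : ℝ) (x y : Rn n) : ℝ :=
  hk n τ (x - y) + hk n τ (x + y) + (2 - 4 * Real.exp (-‖y‖^2/(4*τ))) * hk n τ x

theorem hkE_bd {τ : ℝ} (hτ : 0 < τ) (x y : Rn n) :
    |hk n τ (x - y) + hk n τ (x + y) - 2 * hk n τ x| ≤ hkE τ x y := by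
  have h1 := hk_low hτ x y
  have h2 := hk_nonneg hτ x
  have h3 : Real.exp (-‖y‖^2/(4*τ)) ≤ 1 := by
    rw [Real.exp_le_one_iff, neg_div]
    have : 0 ≤ ‖y‖^2 / (4*τ) := by positivity
    linarith
  rw [hkE, abs_le]
  constructor
  · nlinarith
  · nlinarith

theorem hkE_lint {τ : ℝ} (hτ : 0 < τ) (y : Rn n) :
    ∫⁻ x, ENNReal.ofReal (hkE τ x y) ≤ ENNReal.ofReal (‖y‖^2/τ) := by
  have i1 : Integrable (fun x => hk n τ (x - y)) := (hk_int hτ).comp_sub_right y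
  have i2 : Integrable (fun x => hk n τ (x + y)) := (hk_int hτ).comp_add_right y
  have i3 := (hk_int (n := n) hτ).const_mul (2 - 4 * Real.exp (-‖y‖^2/(4*τ)))
  have : Integrable (fun x => hkE τ x y) := (i1.add i2).add i3
  rw [← ofReal_integral_eq_lintegral_ofReal this (ae_of_all _ fun x => (abs_nonneg _).trans (hkE_bd hτ x y))]
  apply ENNReal.ofReal_le_ofReal
  simp only [hkE]
  rw [integral_add (f := fun x => _ + _) (i1.add i2) i3, integral_add i1 i2, integral_const_mul,
    integral_sub_right_eq_self (hk n τ), integral_add_right_eq_self (hk n τ), hk_integral hτ]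
  have := Real.add_one_le_exp (-‖y‖^2/(4*τ))
  have e : ‖y‖^2/τ = -4*(-‖y‖^2/(4*τ)) := by field_simp
  rw [e]; linarith

theorem heat_gain1 (k : Rn n → ℝ) (hk0 : Nice k) (hev : ∀ x, k (-x) = k x) (h0 : ∫ x, k x = 0)
    {τ : ℝ} (hτ : 0 < τ) :
    ∫⁻ x, ‖cv k (hk n τ) x‖ₑ ≤ ENNReal.ofReal (1/τ) * ∫⁻ y, ENNReal.ofReal (‖y‖^2 * ‖k y‖) := by
  have hN := hk_nice (n := n) hτ
  have e : ∀ x, 2 * cv k (hk n τ) x = ∫ y, k y * (hk n τ (x - y) + hk n τ (x + y) - 2 * hk n τ x) := by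
    intro x
    have i1 := hk0.cvInt hN x
    have i2 : Integrable (fun y => k y * hk n τ (x + y)) := by
      have := i1.comp_neg
      refine this.congr (ae_of_all _ fun y => ?_)
      simp [hev]
    have i3 := hk0.int.mul_const (2 * hk n τ x)
    have e2 : ∫ y, k y * hk n τ (x + y) = cv k (hk n τ) x := by
      rw [cv_apply, ← integral_neg_eq_self]; simp [hev, sub_eq_add_neg]
    simp only [mul_sub, mul_add]
    rw [integral_sub (f := fun x => _ + _) (i1.add i2) i3, integral_add i1 i2, e2, ← cv_apply, integral_mul_const, h0]
    ring
  calc ∫⁻ x, ‖cv k (hk n τ) x‖ₑ ≤ ∫⁻ x, ‖2 * cv k (hk n τ) x‖ₑ := by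
        apply lintegral_mono; intro x
        dsimp only
        rw [← ofReal_norm, ← ofReal_norm]
        apply ENNReal.ofReal_le_ofReal
        rw [norm_mul]; norm_num
        have := abs_nonneg (cv k (hk n τ) x)
        linarith
    _ ≤ ∫⁻ x, ∫⁻ y, ‖k y‖ₑ * ENNReal.ofReal (hkE τ x y) := by
        apply lintegral_mono; intro x
        simp only [e x]
        refine (enorm_integral_le_lintegral_enorm _).trans (lintegral_mono fun y => ?_)
        rw [enorm_mul]
        gcongr
        rw [← ofReal_norm]
        exact ENNReal.ofReal_le_ofReal (hkE_bd hτ x y)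
    _ = ∫⁻ y, ∫⁻ x, ‖k y‖ₑ * ENNReal.ofReal (hkE τ x y) := by
        apply lintegral_lintegral_swap
        apply Measurable.aemeasurable
        simp only [Function.uncurry_def]
        apply Measurable.mul (M := ℝ≥0∞)
        · exact (hk0.cont.measurable.comp measurable_snd).enorm
        · apply ENNReal.measurable_ofReal.comp
          apply Continuous.measurable
          simp only [Function.uncurry_def, hkE]
          have := hk_cont (n := n) τ
          fun_prop
    _ ≤ ∫⁻ y, ENNReal.ofReal (1/τ) * ENNReal.ofReal (‖y‖^2 * ‖k y‖) := by
        apply lintegral_mono; intro y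
        dsimp only
        rw [lintegral_const_mul']
        · rw [← ENNReal.ofReal_mul (by positivity)]
          refine (mul_le_mul_right (hkE_lint hτ y) _).trans ?_
          rw [← ofReal_norm, ← ENNReal.ofReal_mul (by positivity)]
          apply ENNReal.ofReal_le_ofReal
          apply le_of_eq; ring
        · exact enorm_ne_top
    _ = _ := by
        rw [lintegral_const_mul']
        exact ENNReal.ofReal_ne_top

theorem heat_gain (k : Rn n → ℝ) (hk0 : Nice k) (hev : ∀ x, k (-x) = k x) (h0 : ∫ x, k x = 0)
    (hm : Integrable (fun x => ‖x‖ ^ 2 * ‖k x‖)) (θ : ℝ) (hθ0 : 0 < θ) (hθ1 : θ < 1) :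
    ∃ M : ℝ≥0∞, M ≠ ∞ ∧ ∀ τ : ℝ, 0 < τ →
    ∫⁻ x, ‖cv k (hk n τ) x‖ₑ ≤ M * ENNReal.ofReal (τ ^ (-θ)) := by
  refine ⟨max (∫⁻ y, ‖k y‖ₑ) (∫⁻ y, ENNReal.ofReal (‖y‖^2 * ‖k y‖)), ?_, fun τ hτ => ?_⟩
  · have h1 := hk0.int.2.ne
    have h2 : ∫⁻ y, ENNReal.ofReal (‖y‖^2 * ‖k y‖) ≠ ∞ := (hm.lintegral_lt_top).ne
    exact (max_lt h1.lt_top h2.lt_top).ne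
  rcases le_total τ 1 with h | h
  · have h1 := young1 k (hk n τ) hk0.cont.measurable (hk_cont τ).measurable 1 le_rfl (by simp)
    rw [eLpNorm_one_eq_lintegral_enorm, eLpNorm_one_eq_lintegral_enorm, hk_lint hτ, mul_one] at h1
    refine h1.trans ((le_max_left _ (∫⁻ y, ENNReal.ofReal (‖y‖^2 * ‖k y‖))).trans ?_)
    refine le_mul_of_one_le_right (by positivity) ?_
    rw [← ENNReal.ofReal_one]
    apply ENNReal.ofReal_le_ofReal
    exact Real.one_le_rpow_of_pos_of_le_one_of_nonpos hτ h (by linarith)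
  · refine (heat_gain1 k hk0 hev h0 hτ).trans ?_
    rw [mul_comm]
    apply mul_le_mul' (le_max_right _ _)
    apply ENNReal.ofReal_le_ofReal
    rw [one_div, ← Real.rpow_neg_one]
    exact Real.rpow_le_rpow_of_exponent_le h (by linarith)

section
variable {ψ₀ Ψ : SchwartzMap (Rn n) ℝ}

theorem scale1 (hψ : IsLPF n ψ₀) (p₀ p₁ : ℝ≥0∞) (hp₀ : 1 ≤ p₀) (hp₀₁ : p₀ ≤ p₁)
    (hp₁ : p₁ < ∞) (θ : ℝ) (hθ0 : 0 < θ) (hθ1 : θ < 1) :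
    ∃ A : ℝ≥0∞, A ≠ ∞ ∧ ∀ τ : ℝ, 0 < τ → ∀ f : Rn n → ℝ, Nice f →
      eLpNorm (cv (fun x => ψ₀ x) (cv (hk n τ) f)) p₁ volume ≤
        A * ENNReal.ofReal (τ ^ (-θ)) * eLpNorm (cv (fun x => ψ₀ x) f) p₀ volume := by
  obtain ⟨A, hA, HA⟩ := bernst (psiT ψ₀) (nice_psiT ψ₀) p₀ p₁ hp₀ hp₀₁ hp₁
  obtain ⟨M, hM, HM⟩ := heat_gain (psiT ψ₀) (nice_psiT ψ₀) (psiT_even hψ) (int_psiT hψ)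
    (mom_psiT ψ₀) θ hθ0 hθ1
  refine ⟨A * M, ENNReal.mul_ne_top hA hM, fun τ hτ f hf => ?_⟩
  have nP := nice_psiT ψ₀
  have nψ := Nice.ofSchwartz ψ₀
  have nh := hk_nice (n := n) hτ
  have e : cv (fun x => ψ₀ x) (cv (hk n τ) f) =
      cv (psiT ψ₀) (cv (cv (psiT ψ₀) (hk n τ)) (cv (fun x => ψ₀ x) f)) := by
    have e1 : cv (fun x => ψ₀ x) (cv (hk n τ) f) = cv (hk n τ) (cv (fun x => ψ₀ x) f) := by
      rw [← nψ.assoc nh hf, cv_comm (fun x => ψ₀ x), nh.assoc nψ hf]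
    have e2 : ∀ g, Nice g → cv (fun x => ψ₀ x) g = cv (psiT ψ₀) (cv (fun x => ψ₀ x) g) := by
      intro g hg
      rw [← nP.assoc nψ hg, lemA hψ]
    rw [e2 _ (nh.cv hf), e2 _ (nh.cv hf), e1, nP.assoc nh (nψ.cv hf)]
  rw [e]
  refine (HA _ (((nP.cv nh).cv (nψ.cv hf)).cont.measurable)).trans ?_
  rw [mul_assoc, mul_assoc]
  gcongr
  rw [← mul_assoc]
  refine (young1 _ _ (nP.cv nh).cont.measurable (nψ.cv hf).cont.measurable p₀ hp₀ (hp₀₁.trans_lt hp₁)).trans ?_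
  gcongr
  exact HM τ hτ

theorem high (hψ : IsLPF n ψ₀) (p₀ p₁ : ℝ≥0∞) (hp₀ : 1 ≤ p₀) (hp₀₁ : p₀ ≤ p₁)
    (hp₁ : p₁ < ∞) (s₀ s₁ : ℝ)
    (hD0 : 0 < s₁ - s₀ + (n:ℝ)/p₀.toReal - (n:ℝ)/p₁.toReal)
    (hD2 : s₁ - s₀ + (n:ℝ)/p₀.toReal - (n:ℝ)/p₁.toReal < 2) :
    ∃ A : ℝ≥0∞, A ≠ ∞ ∧ ∀ τ : ℝ, 0 < τ → ∀ f : Rn n → ℝ, Nice f → ∀ j : ℕ,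
      ENNReal.ofReal ((2:ℝ) ^ ((j:ℝ) * s₁)) * eLpNorm (lpProj ψ₀ (j:ℤ) (cv (hk n τ) f)) p₁ volume ≤
        A * ENNReal.ofReal (τ ^ (-((s₁ - s₀ + (n:ℝ)/p₀.toReal - (n:ℝ)/p₁.toReal)/2))) *
          (ENNReal.ofReal ((2:ℝ) ^ ((j:ℝ) * s₀)) * eLpNorm (lpProj ψ₀ (j:ℤ) f) p₀ volume) := by
  set θ := (s₁ - s₀ + (n:ℝ)/p₀.toReal - (n:ℝ)/p₁.toReal)/2 with hθ
  obtain ⟨A, hA, HA⟩ := scale1 hψ p₀ p₁ hp₀ hp₀₁ hp₁ θ (by linarith) (by linarith)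
  refine ⟨A, hA, fun τ hτ f hf j => ?_⟩
  have hp₀' := hp₀₁.trans_lt hp₁
  have hp₁' := hp₀.trans hp₀₁
  rw [lpP, lpP, zpow_natCast]
  have hj : ∀ s : ℝ, (2:ℝ) ^ ((j:ℝ) * s) = ((2:ℝ)^j) ^ s := by
    intro s; rw [Real.rpow_mul (by norm_num), Real.rpow_natCast]
  rw [hj, hj]
  have hc : 0 < (2:ℝ)^j := by positivity
  generalize (2:ℝ)^j = c at hc
  set g := sc c⁻¹ f with hg
  have hgn : Nice g := hf.sc (by positivity)
  have hfg : f = sc c g := (sc_sc c hc f).symm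
  have nψ := Nice.ofSchwartz ψ₀
  have hct : 0 < c^2*τ := by positivity
  have nh := hk_nice (n := n) hct
  rw [hfg, hk_dl hτ hc, cv_dl_sc c hc, cv_dl_sc c hc, cv_dl_sc c hc,
    eLpNorm_sc c hc _ (nψ.cv (nh.cv hgn)).cont.measurable p₁ hp₁' hp₁,
    eLpNorm_sc c hc _ (nψ.cv hgn).cont.measurable p₀ hp₀ hp₀']
  have h1 := HA (c^2*τ) hct g hgn
  refine (mul_le_mul_right (mul_le_mul_right h1 _) _).trans ?_
  have e : c ^ s₁ * c ^ (-(n:ℝ)/p₁.toReal) * (c^2*τ) ^ (-θ) = τ ^ (-θ) * c ^ s₀ * c ^ (-(n:ℝ)/p₀.toReal) := by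
    rw [Real.mul_rpow (by positivity) hτ.le, ← Real.rpow_natCast c 2, ← Real.rpow_mul hc.le]
    rw [mul_comm (c ^ _) (τ ^ _), ← mul_assoc, mul_comm _ (τ ^ (-θ)), mul_assoc, mul_assoc, mul_assoc,
      ← Real.rpow_add hc, ← Real.rpow_add hc, ← Real.rpow_add hc]
    congr 2
    rw [hθ]; push_cast; ring
  have e2 := congrArg ENNReal.ofReal e
  rw [ENNReal.ofReal_mul (by positivity), ENNReal.ofReal_mul (by positivity),
    ENNReal.ofReal_mul (by positivity), ENNReal.ofReal_mul (by positivity)] at e2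
  apply le_of_eq
  calc _ = A * (ENNReal.ofReal (c ^ s₁) * ENNReal.ofReal (c ^ (-(n:ℝ)/p₁.toReal)) * ENNReal.ofReal ((c^2*τ) ^ (-θ))) * eLpNorm (cv (fun x => ψ₀ x) g) p₀ volume := by ring
    _ = _ := by rw [e2]; ring

theorem low (hψ : IsLPF n ψ₀) (hΨ : IsLowPiece ψ₀ Ψ) (p₀ p₁ : ℝ≥0∞) (hp₀ : 1 ≤ p₀) (hp₀₁ : p₀ ≤ p₁)
    (hp₁ : p₁ < ∞) (θ : ℝ) (hθ0 : 0 < θ) :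
    ∃ A : ℝ≥0∞, A ≠ ∞ ∧ ∀ τ : ℝ, 0 < τ → τ ≤ 1 → ∀ f : Rn n → ℝ, Nice f →
      eLpNorm (cv (fun x => Ψ x) (cv (hk n τ) f)) p₁ volume ≤
        A * ENNReal.ofReal (τ ^ (-θ)) * eLpNorm (cv (fun x => Ψ x) f) p₀ volume := by
  have nΨ := Nice.ofSchwartz Ψ
  have n2 : Nice (dl 2 (fun x => Ψ x)) := nΨ.dl (by norm_num)
  obtain ⟨A, hA, HA⟩ := bernst _ n2 p₀ p₁ hp₀ hp₀₁ hp₁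
  refine ⟨A, hA, fun τ hτ hτ1 f hf => ?_⟩
  have nh := hk_nice (n := n) hτ
  have e : cv (fun x => Ψ x) (cv (hk n τ) f) =
      cv (dl 2 (fun x => Ψ x)) (cv (hk n τ) (cv (fun x => Ψ x) f)) := by
    have e1 : cv (fun x => Ψ x) (cv (hk n τ) f) = cv (hk n τ) (cv (fun x => Ψ x) f) := by
      rw [← nΨ.assoc nh hf, cv_comm (fun x => Ψ x), nh.assoc nΨ hf]
    rw [← e1, ← n2.assoc nΨ (nh.cv hf), lemB hψ hΨ]
  rw [e]
  refine (HA _ (((nh).cv (nΨ.cv hf)).cont.measurable)).trans ?_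
  rw [mul_assoc]
  gcongr
  refine (young1 _ _ nh.cont.measurable (nΨ.cv hf).cont.measurable p₀ hp₀ (hp₀₁.trans_lt hp₁)).trans ?_
  gcongr
  rw [hk_lint hτ, ← ENNReal.ofReal_one]
  apply ENNReal.ofReal_le_ofReal
  exact Real.one_le_rpow_of_pos_of_le_one_of_nonpos hτ hτ1 (by linarith)
end

section
variable {ψ₀ Ψ : SchwartzMap (Rn n) ℝ}

theorem cvsum (f : Rn n → ℝ) (hf : Nice f) (N : ℕ) (hψ : IsLPF n ψ₀) (hΨ : IsLowPiece ψ₀ Ψ) :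
    cv (dl ((2:ℝ) ^ N) (fun x => Ψ x)) f =
      cv (fun x => Ψ x) f + ∑ j ∈ Finset.range N, lpProj ψ₀ (j:ℤ) f := by
  ext x
  rw [tele hψ hΨ N, Pi.add_apply, Finset.sum_apply]
  simp only [lpP, cv_apply, add_mul, Finset.sum_mul]
  rw [integral_add ((Nice.ofSchwartz Ψ).cvInt hf x), integral_finset_sum]
  · intro j _; exact (nice_lpK ψ₀ j).cvInt hf x
  · exact integrable_finset_sum _ fun j _ => (nice_lpK ψ₀ j).cvInt hf x

theorem cvlim (f : Rn n → ℝ) (hf : Nice f) (hψ : IsLPF n ψ₀) (hΨ : IsLowPiece ψ₀ Ψ) (x : Rn n) :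
    Tendsto (fun N : ℕ => cv (dl ((2:ℝ) ^ N) (fun x => Ψ x)) f x) atTop (nhds (f x)) := by
  have e : f x = ∫ y, Ψ y * f x := by rw [integral_mul_const, int_Psi hψ hΨ, one_mul]
  rw [e]
  have e2 : ∀ N : ℕ, cv (dl ((2:ℝ) ^ N) (fun x => Ψ x)) f x = ∫ y, Ψ y * f (x - ((2:ℝ)^N)⁻¹ • y) :=
    fun N => cv_dl_apply _ (by positivity) _ _ _
  simp only [e2]
  obtain ⟨C, hC⟩ := hf.bdd
  apply tendsto_integral_of_dominated_convergence (fun y => ‖Ψ y‖ * C)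
  · intro N
    have := hf.cont
    have h2 : Continuous (fun y => Ψ y) := Ψ.continuous
    exact (h2.mul (this.comp (continuous_const.sub (continuous_const_smul _)))).aestronglyMeasurable
  · exact Ψ.integrable.norm.mul_const C
  · intro N
    filter_upwards with y
    rw [norm_mul]
    gcongr
    exact hC _
  · filter_upwards with y
    apply Tendsto.const_mul
    have h1 : Tendsto (fun N : ℕ => ((2:ℝ)^N)⁻¹) atTop (nhds 0) := by
      exact (tendsto_pow_atTop_atTop_of_one_lt (by norm_num : (1:ℝ) < 2)).inv_tendsto_atTop
    have h2 : Tendsto (fun N : ℕ => x - ((2:ℝ)^N)⁻¹ • y) atTop (nhds (x - (0:ℝ) • y)) :=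
      tendsto_const_nhds.sub (h1.smul_const y)
    rw [zero_smul, sub_zero] at h2
    exact (hf.cont.tendsto x).comp h2

theorem lpBound (hψ : IsLPF n ψ₀) (hΨ : IsLowPiece ψ₀ Ψ) (p q : ℝ≥0∞) (hp : 1 ≤ p) 
    (hq : 1 ≤ q) (hq' : q < ∞) (s : ℝ) (hs : 0 < s) :
    ∃ C : ℝ≥0∞, C ≠ ∞ ∧ ∀ f : Rn n → ℝ, Nice f → eLpNorm f p volume ≤ C * besovNorm ψ₀ Ψ s p q f := by
  have hqr : 0 < q.toReal := ENNReal.toReal_pos (one_pos.trans_le hq).ne' hq'.ne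
  set Z : ℝ≥0∞ := ∑' j : ℕ, ENNReal.ofReal ((2:ℝ) ^ (-((j:ℝ) * s))) with hZ
  have hZt : Z ≠ ∞ := by
    have hr : (2:ℝ) ^ (-s) < 1 := Real.rpow_lt_one_of_one_lt_of_neg (by norm_num) (by linarith)
    have : ∀ j : ℕ, (2:ℝ) ^ (-((j:ℝ) * s)) = ((2:ℝ) ^ (-s)) ^ j := by
      intro j
      rw [← Real.rpow_natCast, ← Real.rpow_mul (by norm_num)]; congr 1; ring
    simp only [hZ, this]
    exact (summable_geometric_of_lt_one (by positivity) hr).tsum_ofReal_ne_top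
  refine ⟨1 + Z, by simp [hZt], fun f hf => ?_⟩
  rw [besovNorm, if_neg hq'.ne]
  set S := (∑' j : ℕ, (ENNReal.ofReal ((2:ℝ) ^ ((j:ℝ) * s)) *
        eLpNorm (lpProj ψ₀ (j:ℤ) f) p volume) ^ q.toReal) ^ (1 / q.toReal) with hS
  change _ ≤ (1 + Z) * (eLpNorm (cv (fun x => Ψ x) f) p volume + S)
  have hj : ∀ j : ℕ, eLpNorm (lpProj ψ₀ (j:ℤ) f) p volume ≤ ENNReal.ofReal ((2:ℝ) ^ (-((j:ℝ) * s))) * S := by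
    intro j
    have h1 : ENNReal.ofReal ((2:ℝ) ^ ((j:ℝ) * s)) * eLpNorm (lpProj ψ₀ (j:ℤ) f) p volume ≤ S := by
      rw [hS, one_div]
      rw [ENNReal.le_rpow_inv_iff hqr]
      exact ENNReal.le_tsum (f := fun j : ℕ => (ENNReal.ofReal ((2:ℝ) ^ ((j:ℝ) * s)) *
        eLpNorm (lpProj ψ₀ (j:ℤ) f) p volume) ^ q.toReal) j
    refine le_trans ?_ (mul_le_mul_right h1 _)
    rw [← mul_assoc, ← ENNReal.ofReal_mul (by positivity), ← Real.rpow_add (by norm_num), neg_add_cancel]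
    simp
  refine (Lp.eLpNorm_lim_le_liminf_eLpNorm (f := fun N : ℕ => cv (dl ((2:ℝ) ^ N) (fun x => Ψ x)) f)
    (fun N => (((Nice.ofSchwartz Ψ).dl (by positivity)).cv hf).cont.aestronglyMeasurable) f
    (ae_of_all _ fun x => cvlim f hf hψ hΨ x)).trans ?_
  apply liminf_le_of_frequently_le'
  apply Frequently.of_forall
  intro N
  rw [cvsum f hf N hψ hΨ]
  have m1 : AEStronglyMeasurable (cv (fun x => Ψ x) f) volume := ((Nice.ofSchwartz Ψ).cv hf).cont.aestronglyMeasurable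
  have m2 : ∀ j : ℕ, AEStronglyMeasurable (lpProj ψ₀ (j:ℤ) f) volume := by
    intro j; rw [lpP]; exact ((nice_lpK ψ₀ j).cv hf).cont.aestronglyMeasurable
  refine (eLpNorm_add_le m1 (Finset.aestronglyMeasurable_sum _ fun j _ => m2 j) hp).trans ?_
  have h3 : eLpNorm (∑ j ∈ Finset.range N, lpProj ψ₀ (j:ℤ) f) p volume ≤ Z * S := by
    refine (eLpNorm_sum_le (fun j _ => m2 j) hp).trans ?_
    refine (Finset.sum_le_sum fun j _ => hj j).trans ?_
    rw [← Finset.sum_mul]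
    gcongr
    exact ENNReal.sum_le_tsum _
  calc _ ≤ eLpNorm (cv (fun x => Ψ x) f) p volume + Z * S := by gcongr
    _ ≤ _ := by
      rw [mul_add, add_mul, add_mul, one_mul, one_mul]
      exact add_le_add le_self_add le_add_self
end

theorem meas_cv {k f : ℝ → Rn n → ℝ} (h1 : Measurable (Function.uncurry k))
    (h2 : Measurable (Function.uncurry f)) : Measurable (Function.uncurry fun a => cv (k a) (f a)) := by
  have : Measurable (fun z : (ℝ × Rn n) × Rn n => k z.1.1 z.2 * f z.1.1 (z.1.2 - z.2)) := by
    apply Measurable.mul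
    · exact h1.comp ((measurable_fst.comp measurable_fst).prodMk measurable_snd)
    · exact h2.comp ((measurable_fst.comp measurable_fst).prodMk
        ((measurable_snd.comp measurable_fst).sub measurable_snd))
  exact (this.stronglyMeasurable.integral_prod_right (ν := (volume : Measure (Rn n)))).measurable

theorem meas_const {k : Rn n → ℝ} (hk : Measurable k) : Measurable (Function.uncurry fun _ : ℝ => k) :=
  hk.comp measurable_snd

theorem eLp_eq (p : ℝ≥0∞) (hp : 1 ≤ p) (hp' : p < ∞) (f : Rn n → ℝ) :
    eLpNorm f p volume = (∫⁻ x, ‖f x‖ₑ ^ p.toReal) ^ (1/p.toReal) :=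
  eLpNorm_eq_lintegral_rpow_enorm_toReal (one_pos.trans_le hp).ne' hp'.ne

theorem meas_eLp {f : ℝ → Rn n → ℝ} (h : Measurable (Function.uncurry f)) (p : ℝ≥0∞) (hp : 1 ≤ p) (hp' : p < ∞) :
    Measurable (fun a => eLpNorm (f a) p volume) := by
  simp only [eLp_eq p hp hp']
  apply Measurable.pow_const
  exact (h.enorm.pow_const p.toReal).lintegral_prod_right'

/-- Duhamel integrand -/
def Vd (t : ℝ) (w : ℝ → Rn n → ℝ) (s : ℝ) : Rn n → ℝ :=
  cv (fun x => if s < t then hk n (t - s) x else 0) (w s)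

theorem meas_Vd (t : ℝ) {w : ℝ → Rn n → ℝ} (hw : Measurable (Function.uncurry w)) :
    Measurable (Function.uncurry (Vd t w)) := by
  apply meas_cv (k := fun s x => if s < t then hk n (t - s) x else 0) _ hw
  have e : (Function.uncurry fun s (x : Rn n) => if s < t then hk n (t - s) x else 0) =
    fun z : ℝ × Rn n => if z.1 < t then hk n (t - z.1) z.2 else 0 := rfl
  rw [e]
  apply Measurable.ite
  · exact measurableSet_lt measurable_fst measurable_const
  · unfold hk
    fun_prop
  · exact measurable_const

theorem Vd_lt {t s : ℝ} (h : s < t) (w : ℝ → Rn n → ℝ) : Vd t w s = cv (hk n (t - s)) (w s) := by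
  simp [Vd, h]

theorem cv_zero_left (f : Rn n → ℝ) : cv (fun _ => 0) f = fun _ => 0 := by
  ext x; simp [cv_apply]

theorem cv_zero_right (f : Rn n → ℝ) : cv f (fun _ => 0) = fun _ => 0 := by
  ext x; simp [cv_apply]

theorem Vd_ge {t s : ℝ} (h : t ≤ s) (w : ℝ → Rn n → ℝ) : Vd t w s = fun _ => 0 := by
  rw [← cv_zero_left (w s)]
  simp [Vd, not_lt.2 h]

theorem Vd_eLp (t : ℝ) (w : ℝ → Rn n → ℝ) (s : ℝ) (hw : Measurable (w s)) (p : ℝ≥0∞) (hp : 1 ≤ p) (hp' : p < ∞) :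
    eLpNorm (Vd t w s) p volume ≤ eLpNorm (w s) p volume := by
  rcases lt_or_ge s t with h | h
  · rw [Vd_lt h]
    refine (young1 _ _ (hk_cont _).measurable hw p hp hp').trans ?_
    rw [hk_lint (by linarith), one_mul]
  · rw [Vd_ge h]
    have := eLpNorm_zero' (α := Rn n) (ε := ℝ) (p := p) (μ := volume)
    rw [this]; exact zero_le

theorem cv_duh (κ : Rn n → ℝ) (hκ : Nice κ) (t : ℝ) (w : ℝ → Rn n → ℝ)
    (hw : Measurable (Function.uncurry w)) (p : ℝ≥0∞) (hp : 1 ≤ p) (hp' : p < ∞)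
    (hfin : ∫⁻ s, eLpNorm (w s) p volume ≠ ∞) (x : Rn n) :
    cv κ (fun y => ∫ s, Vd t w s y) x = ∫ s, cv κ (Vd t w s) x := by
  simp only [cv_apply, ← integral_const_mul]
  obtain ⟨B, hB, HB⟩ := holder_sup κ hκ p hp hp'
  have mV := meas_Vd t hw
  have mI : Measurable (Function.uncurry fun (s : ℝ) (y : Rn n) => κ y * Vd t w s (x - y)) := by
    apply Measurable.mul
    · exact hκ.cont.measurable.comp measurable_snd
    · exact mV.comp (measurable_fst.prodMk (measurable_const.sub measurable_snd))
  symm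
  apply integral_integral_swap
  refine ⟨mI.aestronglyMeasurable, ?_⟩
  rw [HasFiniteIntegral, lintegral_prod _ mI.enorm.aemeasurable]
  simp only [Function.uncurry_apply_pair, enorm_mul]
  refine lt_of_le_of_lt (lintegral_mono (g := fun s => B * eLpNorm (w s) p volume) fun s => ?_) ?_
  · refine (HB (Vd t w s) (mV.comp measurable_prodMk_left) x).trans ?_
    refine mul_le_mul_right ?_ B
    exact Vd_eLp t w s (hw.comp measurable_prodMk_left) p hp hp'
  · rw [lintegral_const_mul' _ _ hB]
    exact ENNReal.mul_lt_top hB.lt_top hfin.lt_top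

theorem duh_mink (κ : Rn n → ℝ) (hκ : Nice κ) (t : ℝ) (w : ℝ → Rn n → ℝ)
    (hw : Measurable (Function.uncurry w)) (p p₁ : ℝ≥0∞) (hp : 1 ≤ p) (hp' : p < ∞)
    (hp1 : 1 ≤ p₁) (hp1' : p₁ < ∞)
    (hfin : ∫⁻ s, eLpNorm (w s) p volume ≠ ∞) :
    eLpNorm (cv κ (fun y => ∫ s, Vd t w s y)) p₁ volume ≤ ∫⁻ s, eLpNorm (cv κ (Vd t w s)) p₁ volume := by
  simp only [eLp_eq p₁ hp1 hp1']
  have h1 : 1 ≤ p₁.toReal := by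
    rw [← ENNReal.toReal_one]; exact ENNReal.toReal_mono hp1'.ne hp1
  refine le_trans ?_ (mink volume volume (fun (s : ℝ) (x : Rn n) => ‖cv κ (Vd t w s) x‖ₑ)
    (meas_cv (meas_const hκ.cont.measurable) (meas_Vd t hw)).enorm p₁.toReal h1)
  gcongr with x
  rw [cv_duh κ hκ t w hw p hp hp' hfin x]
  exact enorm_integral_le_lintegral_enorm _

section
variable {ψ₀ Ψ : SchwartzMap (Rn n) ℝ}

theorem bes_eq {q : ℝ≥0∞} (hq' : q < ∞) (s : ℝ) (p : ℝ≥0∞) (f : Rn n → ℝ) :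
    besovNorm ψ₀ Ψ s p q f = eLpNorm (cv (fun x => Ψ x) f) p volume +
      (∑' j : ℕ, (ENNReal.ofReal ((2:ℝ) ^ ((j:ℝ) * s)) *
        eLpNorm (lpProj ψ₀ (j:ℤ) f) p volume) ^ q.toReal) ^ (1 / q.toReal) := by
  rw [besovNorm, if_neg hq'.ne]; rfl

theorem meas_lp {w : ℝ → Rn n → ℝ}
    (hw : Measurable (Function.uncurry w)) (j : ℤ) : Measurable (Function.uncurry fun s => lpProj ψ₀ j (w s)) := by
  simp only [lpP]
  exact meas_cv (meas_const (nice_lpK ψ₀ j).cont.measurable) hw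

theorem meas_bes {q : ℝ≥0∞} (hq' : q < ∞) (s : ℝ) (p : ℝ≥0∞) (hp : 1 ≤ p) (hp' : p < ∞) {w : ℝ → Rn n → ℝ}
    (hw : Measurable (Function.uncurry w)) : Measurable (fun a => besovNorm ψ₀ Ψ s p q (w a)) := by
  simp only [bes_eq hq']
  apply Measurable.add
  · exact meas_eLp (meas_cv (meas_const (Nice.ofSchwartz Ψ).cont.measurable) hw) p hp hp'
  · apply Measurable.pow_const
    apply Measurable.ennreal_tsum
    intro j
    apply Measurable.pow_const
    exact (meas_eLp (meas_lp hw j) p hp hp').const_mul _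

theorem bes_zero {q : ℝ≥0∞} (hq : 1 ≤ q) (hq' : q < ∞) (s : ℝ) (p : ℝ≥0∞) :
    besovNorm ψ₀ Ψ s p q (fun _ => 0) = 0 := by
  have hqr : 0 < q.toReal := ENNReal.toReal_pos (one_pos.trans_le hq).ne' hq'.ne
  rw [bes_eq hq']
  have := eLpNorm_zero' (α := Rn n) (ε := ℝ) (p := p) (μ := volume)
  simp only [lpP, cv_zero_right]
  simp only [this, mul_zero, ENNReal.zero_rpow_of_pos hqr, tsum_zero, zero_add]
  exact ENNReal.zero_rpow_of_pos (by positivity)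

theorem main_pt (hψ : IsLPF n ψ₀) (hΨ : IsLowPiece ψ₀ Ψ)
    (p₀ p₁ : ℝ≥0∞) (hp₀ : 1 ≤ p₀) (hp₀₁ : p₀ ≤ p₁) (hp₁ : p₁ < ∞)
    (s₀ s₁ : ℝ) (q : ℝ≥0∞) (hq : 1 ≤ q) (hq' : q < ∞)
    (hD0 : 0 < s₁ - s₀ + (n:ℝ)/p₀.toReal - (n:ℝ)/p₁.toReal)
    (hD2 : s₁ - s₀ + (n:ℝ)/p₀.toReal - (n:ℝ)/p₁.toReal < 2) :
    ∃ A : ℝ≥0∞, A ≠ ∞ ∧ ∀ w : ℝ → Rn n → ℝ, Measurable (Function.uncurry w) → (∀ s, Nice (w s)) →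
      (∀ s, s ≤ 0 → w s = fun _ => 0) → ∫⁻ s, eLpNorm (w s) p₀ volume ≠ ∞ → ∀ t, t ≤ 1 →
      besovNorm ψ₀ Ψ s₁ p₁ q (fun y => ∫ s, Vd t w s y) ≤
        A * ∫⁻ s, hlsK ((s₁ - s₀ + (n:ℝ)/p₀.toReal - (n:ℝ)/p₁.toReal)/2) (t - s) *
          besovNorm ψ₀ Ψ s₀ p₀ q (w s) := by
  obtain ⟨A, hA, HA⟩ := high hψ p₀ p₁ hp₀ hp₀₁ hp₁ s₀ s₁ hD0 hD2
  set θ := (s₁ - s₀ + (n:ℝ)/p₀.toReal - (n:ℝ)/p₁.toReal)/2 with hθ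
  obtain ⟨A', hA', HA'⟩ := low hψ hΨ p₀ p₁ hp₀ hp₀₁ hp₁ θ (by linarith)
  have hqr : 0 < q.toReal := ENNReal.toReal_pos (one_pos.trans_le hq).ne' hq'.ne
  have hqr1 : 1 ≤ q.toReal := by
    rw [← ENNReal.toReal_one]; exact ENNReal.toReal_mono hq'.ne hq
  refine ⟨A' + A, by simp [hA, hA'], fun w hw hN hw0 hfin t ht => ?_⟩
  have hp0' := hp₀₁.trans_lt hp₁
  have hp1' := hp₀.trans hp₀₁
  have ez := eLpNorm_zero' (α := Rn n) (ε := ℝ) (p := p₁) (μ := volume)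
  -- pointwise bounds
  have B1 : ∀ s, eLpNorm (cv (fun x => Ψ x) (Vd t w s)) p₁ volume ≤
      A' * hlsK θ (t - s) * eLpNorm (cv (fun x => Ψ x) (w s)) p₀ volume := by
    intro s
    rcases lt_or_ge s t with h | h
    · rcases lt_or_ge 0 s with h0 | h0
      · rw [Vd_lt h, hlsK, if_pos (by linarith)]
        exact HA' (t - s) (by linarith) (by linarith) (w s) (hN s)
      · rw [Vd_lt h, hw0 s h0, cv_zero_right, cv_zero_right, ez]; exact zero_le
    · rw [Vd_ge h, cv_zero_right, ez]; exact zero_le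
  have B2 : ∀ (j : ℕ) s, ENNReal.ofReal ((2:ℝ) ^ ((j:ℝ) * s₁)) * eLpNorm (lpProj ψ₀ (j:ℤ) (Vd t w s)) p₁ volume ≤
      A * hlsK θ (t - s) * (ENNReal.ofReal ((2:ℝ) ^ ((j:ℝ) * s₀)) * eLpNorm (lpProj ψ₀ (j:ℤ) (w s)) p₀ volume) := by
    intro j s
    rcases lt_or_ge s t with h | h
    · rw [Vd_lt h, hlsK, if_pos (by linarith)]
      exact HA (t - s) (by linarith) (w s) (hN s) j
    · rw [Vd_ge h, lpP, cv_zero_right, ez, mul_zero]; exact zero_le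
  set b : ℕ → ℝ → ℝ≥0∞ := fun j s => ENNReal.ofReal ((2:ℝ) ^ ((j:ℝ) * s₀)) * eLpNorm (lpProj ψ₀ (j:ℤ) (w s)) p₀ volume with hb
  have mb : ∀ j, Measurable (b j) := fun j => (meas_eLp (meas_lp hw j) p₀ hp₀ hp0').const_mul _
  have mK : Measurable (fun s => hlsK θ (t - s)) := (hlsK_meas θ).comp (measurable_const.sub measurable_id)
  have mG : Measurable (Function.uncurry fun (s : ℝ) (j : ℕ) => A * hlsK θ (t - s) * b j s) := by
    apply measurable_from_prod_countable_left
    intro j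
    exact (mK.const_mul A).mul (mb j)
  rw [bes_eq hq']
  have C1 : eLpNorm (cv (fun x => Ψ x) (fun y => ∫ s, Vd t w s y)) p₁ volume ≤
      ∫⁻ s, A' * hlsK θ (t - s) * eLpNorm (cv (fun x => Ψ x) (w s)) p₀ volume :=
    (duh_mink _ (Nice.ofSchwartz Ψ) t w hw p₀ p₁ hp₀ hp0' hp1' hp₁ hfin).trans (lintegral_mono B1)
  have C2 : ∀ j : ℕ, ENNReal.ofReal ((2:ℝ) ^ ((j:ℝ) * s₁)) * eLpNorm (lpProj ψ₀ (j:ℤ) (fun y => ∫ s, Vd t w s y)) p₁ volume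
      ≤ ∫⁻ s, A * hlsK θ (t - s) * b j s := by
    intro j
    have := duh_mink _ (nice_lpK ψ₀ j) t w hw p₀ p₁ hp₀ hp0' hp1' hp₁ hfin
    rw [lpP]
    refine (mul_le_mul_right this _).trans ?_
    rw [← lintegral_const_mul' _ _ ENNReal.ofReal_ne_top]
    apply lintegral_mono
    intro s
    have := B2 j s
    rw [lpP] at this
    exact this
  have C3 : (∑' j : ℕ, (ENNReal.ofReal ((2:ℝ) ^ ((j:ℝ) * s₁)) *
        eLpNorm (lpProj ψ₀ (j:ℤ) (fun y => ∫ s, Vd t w s y)) p₁ volume) ^ q.toReal) ^ (1 / q.toReal) ≤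
      ∫⁻ s, A * hlsK θ (t - s) * (∑' j : ℕ, b j s ^ q.toReal) ^ (1 / q.toReal) := by
    have hm := mink (volume : Measure ℝ) (Measure.count : Measure ℕ) (fun (s : ℝ) (j : ℕ) => A * hlsK θ (t - s) * b j s) mG q.toReal hqr1
    simp only [lintegral_count] at hm
    refine le_trans ?_ (hm.trans (lintegral_mono fun s => ?_))
    · gcongr with j
      exact C2 j
    · dsimp only
      simp only [ENNReal.mul_rpow_of_nonneg _ _ hqr.le, ENNReal.tsum_mul_left]
      rw [ENNReal.mul_rpow_of_nonneg _ _ (by positivity), ENNReal.mul_rpow_of_nonneg _ _ (by positivity),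
        ← ENNReal.rpow_mul, ← ENNReal.rpow_mul, mul_one_div_cancel hqr.ne', ENNReal.rpow_one, ENNReal.rpow_one]
  refine (add_le_add C1 C3).trans ?_
  have m1 : Measurable (fun s => A' * hlsK θ (t - s) * eLpNorm (cv (fun x => Ψ x) (w s)) p₀ volume) :=
    (mK.const_mul A').mul (meas_eLp (meas_cv (meas_const (Nice.ofSchwartz Ψ).cont.measurable) hw) p₀ hp₀ hp0')
  rw [← lintegral_add_left m1, ← lintegral_const_mul' _ _ (by simp [hA, hA'])]
  apply lintegral_mono
  intro s
  dsimp only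
  rw [bes_eq hq']
  change _ ≤ (A' + A) * (hlsK θ (t - s) * (_ + (∑' j : ℕ, b j s ^ q.toReal) ^ (1 / q.toReal)))
  rw [← mul_assoc, mul_add]
  gcongr
  · exact le_self_add
  · exact le_add_self
end

/-- Space–time estimate for the Duhamel operator: with
`1/σ₀ − 1/σ₁ = 1 − (s₁ − s₀ + n/p₀ − n/p₁)/2`, `0 < s₁ − s₀ + n/p₀ − n/p₁ < 2`,
`(∫₀ᵀ ‖∫₀ᵗ e^{(t−s)Δ}u(s) ds‖^{σ₁}_{B^{s₁}_{p₁,q}} dt)^{1/σ₁}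
  ≤ C (∫₀ᵀ ‖u(t)‖^{σ₀}_{B^{s₀}_{p₀,q}} dt)^{1/σ₀}`. -/
theorem besov_duhamel_spacetime_estimate
    (n : ℕ) (hn : 1 ≤ n) (ψ₀ Ψ : SchwartzMap (Rn n) ℝ)
    (hψ : IsLPF n ψ₀) (hΨ : IsLowPiece ψ₀ Ψ)
    (p₀ p₁ : ℝ≥0∞) (hp₀ : 1 ≤ p₀) (hp₀₁ : p₀ ≤ p₁) (hp₁ : p₁ < ∞)
    (s₀ s₁ : ℝ) (hs₀ : 0 < s₀) (hs₀₁ : s₀ ≤ s₁)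
    (q : ℝ≥0∞) (hq : 1 ≤ q) (hq' : q < ∞)
    (σ₀ σ₁ : ℝ) (hσ₀ : 1 < σ₀) (hσ₀₁ : σ₀ < σ₁)
    (hD0 : 0 < s₁ - s₀ + (n:ℝ)/p₀.toReal - (n:ℝ)/p₁.toReal)
    (hD2 : s₁ - s₀ + (n:ℝ)/p₀.toReal - (n:ℝ)/p₁.toReal < 2)
    (hσdef : 1/σ₀ - 1/σ₁ = 1 - (s₁ - s₀ + (n:ℝ)/p₀.toReal - (n:ℝ)/p₁.toReal)/2) :
    ∃ C : ℝ, 0 < C ∧ ∀ T : ℝ, 0 < T → T ≤ 1 → ∀ u : ℝ → Rn n → ℝ,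
      (∀ t ∈ Set.Ioo (0:ℝ) T, ∃ U : SchwartzMap (Rn n) ℝ, ∀ x, U x = u t x) →
      (∀ x : Rn n, ContinuousOn (fun t => u t x) (Set.Ioo (0:ℝ) T)) →
      (∫⁻ t in Set.Ioo (0:ℝ) T,
          (besovNorm ψ₀ Ψ s₁ p₁ q
            (fun x => ∫ s in (0:ℝ)..t, heatOp n (t - s) (u s) x)) ^ σ₁) ^ (1/σ₁)
        ≤ ENNReal.ofReal C *
          (∫⁻ t in Set.Ioo (0:ℝ) T, (besovNorm ψ₀ Ψ s₀ p₀ q (u t)) ^ σ₀) ^ (1/σ₀) := by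
  obtain ⟨A, hA, HA⟩ := main_pt hψ hΨ p₀ p₁ hp₀ hp₀₁ hp₁ s₀ s₁ q hq hq' hD0 hD2
  set θ := (s₁ - s₀ + (n:ℝ)/p₀.toReal - (n:ℝ)/p₁.toReal)/2 with hθ
  obtain ⟨C, hC, HC⟩ := hls σ₀ σ₁ θ hσ₀ hσ₀₁ (by linarith) hσdef
  obtain ⟨D, hD, HD⟩ := lpBound hψ hΨ p₀ q hp₀ hq hq' s₀ hs₀
  have hp0' := hp₀₁.trans_lt hp₁
  have h0σ : 0 < σ₀ := by linarith
  have h1σ : 0 < σ₁ := by linarith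
  refine ⟨(A.toReal + 1) * C, by positivity, fun T hT hT1 u hu hc => ?_⟩
  by_cases hfin : ∫⁻ t in Set.Ioo (0:ℝ) T, (besovNorm ψ₀ Ψ s₀ p₀ q (u t)) ^ σ₀ = ∞
  · rw [hfin, ENNReal.top_rpow_of_pos (by positivity), ENNReal.mul_top]
    · exact le_top
    · exact (ENNReal.ofReal_pos.2 (by positivity)).ne'
  classical
  set w : ℝ → Rn n → ℝ := fun s x => if s ∈ Set.Ioo (0:ℝ) T then u s x else 0 with hwdef
  have w_in : ∀ s ∈ Set.Ioo (0:ℝ) T, w s = u s := by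
    intro s hs; ext x; simp only [hwdef, if_pos hs]
  have w_out : ∀ s, s ∉ Set.Ioo (0:ℝ) T → w s = fun _ => 0 := by
    intro s hs; ext x; simp only [hwdef, if_neg hs]
  have hN : ∀ s, Nice (w s) := by
    intro s
    by_cases hs : s ∈ Set.Ioo (0:ℝ) T
    · rw [w_in s hs]
      obtain ⟨U, hU⟩ := hu s hs
      have : u s = fun x => U x := by ext x; exact (hU x).symm
      rw [this]; exact Nice.ofSchwartz U
    · rw [w_out s hs]
      exact ⟨continuous_const, ⟨0, by simp⟩, integrable_zero _ _ _⟩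
  have hw : Measurable (Function.uncurry w) := by
    have h1 : Measurable (Function.uncurry (fun (x : Rn n) (s : ℝ) => w s x)) := by
      apply measurable_uncurry_of_continuous_of_measurable
      · intro s; exact (hN s).cont
      · intro x
        have := ContinuousOn.measurable_piecewise (s := Set.Ioo (0:ℝ) T) (f := fun s => u s x) (g := fun _ => (0:ℝ))
          (hc x) continuousOn_const measurableSet_Ioo
        exact this
    exact h1.comp measurable_swap
  have hfw : ∫⁻ s, eLpNorm (w s) p₀ volume ≠ ∞ := by
    have e : ∀ s, eLpNorm (w s) p₀ volume ≤ (Set.Ioo (0:ℝ) T).indicator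
        (fun s => D * (1 + (besovNorm ψ₀ Ψ s₀ p₀ q (u s)) ^ σ₀)) s := by
      intro s
      by_cases hs : s ∈ Set.Ioo (0:ℝ) T
      · rw [Set.indicator_of_mem hs]
        refine (HD _ (hN s)).trans ?_
        rw [w_in s hs]
        refine mul_le_mul_right ?_ D
        rcases le_total (besovNorm ψ₀ Ψ s₀ p₀ q (u s)) 1 with h | h
        · exact h.trans le_self_add
        · refine le_trans ?_ le_add_self
          exact ENNReal.le_rpow_self_of_one_le h hσ₀.le
      · rw [w_out s hs, eLpNorm_zero' (α := Rn n) (ε := ℝ)]; exact zero_le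
    refine ((lintegral_mono e).trans_lt ?_).ne
    rw [lintegral_indicator measurableSet_Ioo, lintegral_const_mul' _ _ hD,
      lintegral_add_left measurable_const]
    refine ENNReal.mul_lt_top hD.lt_top (ENNReal.add_lt_top.2 ⟨?_, lt_top_iff_ne_top.2 hfin⟩)
    simp
  have hw0 : ∀ s, s ≤ 0 → w s = fun _ => 0 := fun s hs => w_out s (fun h => by linarith [h.1])
  have hF : ∀ t ∈ Set.Ioo (0:ℝ) T, (fun x => ∫ s in (0:ℝ)..t, heatOp n (t - s) (u s) x) =
      fun x => ∫ s, Vd t w s x := by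
    intro t ht
    ext x
    rw [intervalIntegral.integral_of_le ht.1.le, integral_Ioc_eq_integral_Ioo,
      ← integral_indicator measurableSet_Ioo]
    congr 1
    ext s
    by_cases hs : s ∈ Set.Ioo 0 t
    · rw [Set.indicator_of_mem hs, Vd_lt hs.2, w_in s ⟨hs.1, hs.2.trans ht.2⟩]; rfl
    · rw [Set.indicator_of_notMem hs]
      rcases lt_or_ge s t with h | h
      · have : s ≤ 0 := by
          by_contra hcon
          exact hs ⟨by linarith, h⟩
        rw [Vd_lt h, hw0 s this, cv_zero_right]
      · rw [Vd_ge h]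
  have hbes : ∀ s, besovNorm ψ₀ Ψ s₀ p₀ q (w s) ^ σ₀ = (Set.Ioo (0:ℝ) T).indicator
      (fun s => (besovNorm ψ₀ Ψ s₀ p₀ q (u s)) ^ σ₀) s := by
    intro s
    by_cases hs : s ∈ Set.Ioo (0:ℝ) T
    · rw [Set.indicator_of_mem hs, w_in s hs]
    · rw [Set.indicator_of_notMem hs, w_out s hs, bes_zero hq hq', ENNReal.zero_rpow_of_pos h0σ]
  have hH := HC (fun s => besovNorm ψ₀ Ψ s₀ p₀ q (w s)) (meas_bes hq' s₀ p₀ hp₀ hp0' hw)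
  simp only [hbes] at hH
  rw [lintegral_indicator measurableSet_Ioo] at hH
  have hA2 : A ≤ ENNReal.ofReal (A.toReal + 1) := by
    rw [← ENNReal.ofReal_toReal hA, ENNReal.toReal_ofReal ENNReal.toReal_nonneg]
    exact ENNReal.ofReal_le_ofReal (by linarith)
  rw [ENNReal.ofReal_mul (by positivity), mul_assoc]
  calc _ ≤ (∫⁻ t in Set.Ioo (0:ℝ) T, (A * ∫⁻ s, hlsK θ (t - s) * besovNorm ψ₀ Ψ s₀ p₀ q (w s)) ^ σ₁) ^ (1/σ₁) := by
        apply ENNReal.rpow_le_rpow _ (by positivity)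
        apply setLIntegral_mono' measurableSet_Ioo
        intro t ht
        apply ENNReal.rpow_le_rpow _ h1σ.le
        rw [hF t ht]
        exact HA w hw hN hw0 hfw t (ht.2.le.trans hT1)
    _ ≤ (∫⁻ t, (A * ∫⁻ s, hlsK θ (t - s) * besovNorm ψ₀ Ψ s₀ p₀ q (w s)) ^ σ₁) ^ (1/σ₁) := by
        apply ENNReal.rpow_le_rpow _ (by positivity)
        exact setLIntegral_le_lintegral _ _
    _ = A * (∫⁻ t, (∫⁻ s, hlsK θ (t - s) * besovNorm ψ₀ Ψ s₀ p₀ q (w s)) ^ σ₁) ^ (1/σ₁) := by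
        simp only [ENNReal.mul_rpow_of_nonneg _ _ h1σ.le]
        rw [lintegral_const_mul' _ _ (ENNReal.rpow_ne_top_of_nonneg h1σ.le hA),
          ENNReal.mul_rpow_of_nonneg _ _ (by positivity), ← ENNReal.rpow_mul, mul_one_div_cancel h1σ.ne',
          ENNReal.rpow_one]
    _ ≤ _ := mul_le_mul' hA2 hH
end
end

section
/- Let n ≥ 1, r > 2, and q ∈ [1,∞). There is a constant C > 0, depending only on n, r, q, such that for every sequence (a_j)_{j∈ℤ} of nonnegative reals with a_j = 0 for j < 0: ( ∑_{j≥0} ( ∑_{k≥−2} ∑_{l=−1}^{1} 2^{(r−2)j} · 2^{(3+n/2)(j+k+l)} · a_{j+k} · a_{j+k+l} )^q )^{1/q} ≤ C · ( sup_{m≥0} 2^{(1+n/2)m} a_m ) · ( ∑_{j≥0} ( 2^{rj} a_j )^q )^{1/q}, the inequality being interpreted in [0,∞]. -/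
open scoped ENNReal

noncomputable section

theorem K2_jensen (w f : ℕ → ℝ≥0∞) (q : ℝ) (hq : 1 ≤ q) :
    (∑' k, w k * f k) ≤ (∑' k, w k) ^ (1 - 1/q) * (∑' k, w k * f k ^ q) ^ (1/q) := by
  have hq0 : 0 < q := by linarith
  have h1 : 0 ≤ 1 - 1/q := by
    have : 1/q ≤ 1 := by rw [div_le_one hq0]; exact hq
    linarith
  rw [ENNReal.tsum_eq_iSup_sum]
  refine iSup_le fun s => ?_
  have := ENNReal.inner_le_weight_mul_Lp_of_nonneg s hq w f
  rw [one_div]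
  refine this.trans ?_
  rw [one_div] at h1
  exact mul_le_mul' (ENNReal.rpow_le_rpow (ENNReal.sum_le_tsum s) h1)
    (ENNReal.rpow_le_rpow (ENNReal.sum_le_tsum s) (by positivity))

theorem K2_shift (f : ℤ → ℝ≥0∞) (hf : ∀ j < 0, f j = 0) (c : ℤ) :
    ∑' j : ℕ, f ((j:ℤ) + c) ≤ ∑' j : ℕ, f j := by
  have h1 : ∑' j : ℕ, f (j:ℤ) = ∑' j : ℤ, f j := by
    apply Function.Injective.tsum_eq (g := fun j : ℕ => (j:ℤ)) Nat.cast_injective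
    intro x hx
    by_contra h
    apply hx
    apply hf
    by_contra h2
    exact h ⟨x.toNat, by simp; omega⟩
  rw [h1]
  exact ENNReal.tsum_comp_le_tsum_of_injective (f := fun j : ℕ => (j:ℤ) + c)
    (fun x y h => by simpa using h) f

theorem K2_young (w : ℕ → ℝ≥0∞) (f : ℤ → ℝ≥0∞) (hf : ∀ j < 0, f j = 0) (q : ℝ) (hq : 1 ≤ q) :
    (∑' j : ℕ, (∑' k : ℕ, w k * f ((j:ℤ) + k - 2)) ^ q) ^ (1/q) ≤
      (∑' k, w k) * (∑' j : ℕ, f j ^ q) ^ (1/q) := by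
  have hq0 : 0 < q := by linarith
  have key : (∑' j : ℕ, (∑' k : ℕ, w k * f ((j:ℤ) + k - 2)) ^ q) ≤
      (∑' k, w k) ^ q * (∑' j : ℕ, f j ^ q) := by
    calc _ ≤ ∑' j : ℕ, (∑' k, w k) ^ (q - 1) * (∑' k : ℕ, w k * f ((j:ℤ) + k - 2) ^ q) := by
          refine ENNReal.tsum_le_tsum fun j => ?_
          refine (ENNReal.rpow_le_rpow (K2_jensen w _ q hq) hq0.le).trans ?_
          rw [ENNReal.mul_rpow_of_nonneg _ _ hq0.le, ← ENNReal.rpow_mul, ← ENNReal.rpow_mul]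
          rw [one_div_mul_cancel hq0.ne', ENNReal.rpow_one, sub_mul,
            one_div_mul_cancel hq0.ne', one_mul]
      _ = (∑' k, w k) ^ (q - 1) * ∑' k : ℕ, w k * ∑' j : ℕ, f ((j:ℤ) + (k - 2)) ^ q := by
          rw [ENNReal.tsum_mul_left, ENNReal.tsum_comm]
          simp only [ENNReal.tsum_mul_left, add_sub_assoc]
      _ ≤ (∑' k, w k) ^ (q - 1) * ∑' k : ℕ, w k * ∑' j : ℕ, f j ^ q := by
          refine mul_le_mul' le_rfl (ENNReal.tsum_le_tsum fun k => mul_le_mul' le_rfl ?_)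
          exact K2_shift (fun j => f j ^ q)
            (fun j hj => by simp [hf j hj, hq0]) ((k:ℤ) - 2)
      _ = _ := by
          rw [ENNReal.tsum_mul_right, ← mul_assoc]
          congr 1
          nth_rewrite 2 [← ENNReal.rpow_one (∑' k, w k)]
          rw [← ENNReal.rpow_add_of_nonneg _ _ (by linarith) zero_le_one]
          simp
  refine (ENNReal.rpow_le_rpow key (by positivity : 0 ≤ 1/q)).trans ?_
  rw [ENNReal.mul_rpow_of_nonneg _ _ (by positivity), ← ENNReal.rpow_mul,
    mul_one_div_cancel hq0.ne', ENNReal.rpow_one]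

/-- The key `ℓ^q` estimate (for the term `K₂`) in the proof of the a priori
Besov bound for the LANS equation: for `r > 2` and `q ∈ [1,∞)`, there is `C > 0` depending
only on `n, r, q` such that for every sequence `(a_j)_{j∈ℤ}` of nonnegative reals vanishing
for negative indices,
`(∑_{j≥0} (∑_{k≥−2} ∑_{l=−1}^{1} 2^{(r−2)j} 2^{(3+n/2)(j+k+l)} a_{j+k} a_{j+k+l})^q)^{1/q}
  ≤ C (sup_{m≥0} 2^{(1+n/2)m} a_m) (∑_{j≥0} (2^{rj} a_j)^q)^{1/q}`,
interpreted in `[0,∞]`. -/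
theorem lq_estimate_K2
    (n : ℕ) (hn : 1 ≤ n) (r : ℝ) (hr : 2 < r) (q : ℝ) (hq : 1 ≤ q) :
    ∃ C : ℝ, 0 < C ∧ ∀ a : ℤ → ℝ, (∀ j, 0 ≤ a j) → (∀ j < 0, a j = 0) →
      (∑' j : ℕ,
          (∑' k : ℕ, ∑ l ∈ Finset.Icc (-1 : ℤ) 1,
            ENNReal.ofReal ((2:ℝ) ^ ((r - 2) * (j:ℝ)) *
              (2:ℝ) ^ ((3 + (n:ℝ)/2) * ((j:ℝ) + ((k:ℝ) - 2) + (l:ℝ))) *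
              a ((j:ℤ) + (k:ℤ) - 2) * a ((j:ℤ) + (k:ℤ) - 2 + l))) ^ q) ^ (1/q)
        ≤ ENNReal.ofReal C *
          (⨆ m : ℕ, ENNReal.ofReal ((2:ℝ) ^ ((1 + (n:ℝ)/2) * (m:ℝ)) * a m)) *
          (∑' j : ℕ, ENNReal.ofReal ((2:ℝ) ^ (r * (j:ℝ)) * a j) ^ q) ^ (1/q) := by
  set w : ℕ → ℝ := fun k => 12 * ((2:ℝ) ^ (2 * (r - 2)) * ((2:ℝ) ^ (-(r-2))) ^ k) with hw
  have hw0 : ∀ k, 0 ≤ w k := fun k => by positivity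
  have hws : Summable w := by
    refine Summable.mul_left _ (Summable.mul_left _ (summable_geometric_of_lt_one (by positivity) ?_))
    exact Real.rpow_lt_one_of_one_lt_of_neg (by norm_num) (by linarith)
  refine ⟨∑' k, w k, hws.tsum_pos hw0 0 (by positivity), ?_⟩
  intro a ha ha0
  set S : ℝ≥0∞ := ⨆ m : ℕ, ENNReal.ofReal ((2:ℝ) ^ ((1 + (n:ℝ)/2) * (m:ℝ)) * a m) with hS
  set f : ℤ → ℝ≥0∞ := fun j => ENNReal.ofReal ((2:ℝ) ^ (r * (j:ℝ)) * a j) with hf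
  have hf0 : ∀ j < 0, f j = 0 := fun j hj => by simp [hf, ha0 j hj]
  have hSm : ∀ p : ℤ, ENNReal.ofReal ((2:ℝ) ^ ((1 + (n:ℝ)/2) * (p:ℝ)) * a p) ≤ S := by
    intro p
    rcases lt_or_ge p 0 with hp | hp
    · simp [ha0 p hp]
    · lift p to ℕ using hp
      exact le_iSup (fun m : ℕ => ENNReal.ofReal ((2:ℝ) ^ ((1 + (n:ℝ)/2) * (m:ℝ)) * a m)) p
  have hterm : ∀ j k : ℕ, ∑ l ∈ Finset.Icc (-1 : ℤ) 1,
            ENNReal.ofReal ((2:ℝ) ^ ((r - 2) * (j:ℝ)) *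
              (2:ℝ) ^ ((3 + (n:ℝ)/2) * ((j:ℝ) + ((k:ℝ) - 2) + (l:ℝ))) *
              a ((j:ℤ) + (k:ℤ) - 2) * a ((j:ℤ) + (k:ℤ) - 2 + l)) ≤
        (S * ENNReal.ofReal (w k)) * f ((j:ℤ) + k - 2) := by
    intro j k
    have h1 : ∀ l ∈ Finset.Icc (-1 : ℤ) 1,
        ENNReal.ofReal ((2:ℝ) ^ ((r - 2) * (j:ℝ)) *
              (2:ℝ) ^ ((3 + (n:ℝ)/2) * ((j:ℝ) + ((k:ℝ) - 2) + (l:ℝ))) *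
              a ((j:ℤ) + (k:ℤ) - 2) * a ((j:ℤ) + (k:ℤ) - 2 + l)) ≤
        (S * ENNReal.ofReal (w k / 3)) * f ((j:ℤ) + k - 2) := by
      intro l hl
      obtain ⟨hl1, hl2⟩ := Finset.mem_Icc.mp hl
      have hl2' : (l:ℝ) ≤ 1 := by exact_mod_cast hl2
      refine le_trans ?_ (mul_le_mul' (mul_le_mul' (hSm ((j:ℤ) + k - 2 + l)) le_rfl) le_rfl)
      have e1 : 0 ≤ a ((j:ℤ) + k - 2) := ha _
      have e2 : 0 ≤ a ((j:ℤ) + k - 2 + l) := ha _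
      have e3 := hw0 k
      rw [hf, ← ENNReal.ofReal_mul (by positivity), ← ENNReal.ofReal_mul (by positivity)]
      apply ENNReal.ofReal_le_ofReal
      push_cast
      set x := a ((j:ℤ) + k - 2)
      set y := a ((j:ℤ) + k - 2 + l)
      have e4 : w k / 3 = 2 ^ (2:ℝ) * ((2:ℝ) ^ (2 * (r - 2)) * (2:ℝ) ^ (-(r-2) * (k:ℝ))) := by
        rw [Real.rpow_mul (by norm_num) (-(r-2)) (k:ℝ), Real.rpow_natCast]
        simp only [hw]
        norm_num
        ring
      have h2 : (0:ℝ) < 2 := by norm_num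
      have e5 : (2:ℝ) ^ ((r - 2) * (j:ℝ)) *
          (2:ℝ) ^ ((3 + (n:ℝ)/2) * ((j:ℝ) + ((k:ℝ) - 2) + (l:ℝ))) ≤
          (2:ℝ) ^ ((1 + (n:ℝ)/2) * ((j:ℝ) + k - 2 + l)) * (w k / 3) *
            (2:ℝ) ^ (r * ((j:ℝ) + k - 2)) := by
        rw [e4]
        simp only [← Real.rpow_add h2]
        apply Real.rpow_le_rpow_of_exponent_le (by norm_num)
        linarith
      calc _ ≤ ((2:ℝ) ^ ((1 + (n:ℝ)/2) * ((j:ℝ) + k - 2 + l)) * (w k / 3) *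
            (2:ℝ) ^ (r * ((j:ℝ) + k - 2))) * x * y := by gcongr
        _ = _ := by ring
    refine (Finset.sum_le_sum h1).trans ?_
    rw [Finset.sum_const, nsmul_eq_mul, ← mul_assoc]
    refine mul_le_mul' (le_of_eq ?_) le_rfl
    rw [mul_left_comm]
    congr 1
    have : (((Finset.Icc (-1:ℤ) 1).card : ℕ) : ℝ≥0∞) = ENNReal.ofReal 3 := by simp
    rw [this, ← ENNReal.ofReal_mul (by norm_num)]
    congr 1
    ring
  have hq0 : 0 < q := by linarith
  have hy := K2_young (fun k => S * ENNReal.ofReal (w k)) f hf0 q hq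
  rw [ENNReal.tsum_mul_left, ← ENNReal.ofReal_tsum_of_nonneg hw0 hws, mul_comm S] at hy
  refine le_trans ?_ (hy.trans (le_of_eq ?_))
  · refine ENNReal.rpow_le_rpow (ENNReal.tsum_le_tsum fun j => ENNReal.rpow_le_rpow
      (ENNReal.tsum_le_tsum fun k => hterm j k) hq0.le) (by positivity)
  · simp [hf]
end
end

section
/- Let n ≥ 1, r ∈ ℝ, and q ∈ (1,∞). There is a constant C > 0, depending only on n, r, q, such that for every sequence (a_j)_{j∈ℤ} of nonnegative reals with a_j = 0 for j < 0: ∑_{j≥0} 2^{rjq} a_j^{q−1} ∑_{k=−2}^{2} a_{j+k} ( ∑_{0 ≤ m < j+k−2} 2^{(3+n/2)m − 2j} a_m ) ≤ C · ( ∑_{m≥0} ( 2^{(1+n/2)m} a_m )^q )^{1/q} · ∑_{j≥0} ( 2^{rj} a_j )^q, the inequality being interpreted in [0,∞]. -/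
open scoped ENNReal

noncomputable section


lemma geom_aux (j : ℕ) :
    ∑ m ∈ Finset.Ico (0 : ℤ) (j : ℤ), (2:ℝ) ^ (2 * (m:ℝ)) ≤ (2:ℝ) ^ (2 * (j:ℝ)) := by
  induction j with
  | zero => simp
  | succ j ih =>
    have h : Finset.Ico (0 : ℤ) ((j + 1 : ℕ) : ℤ) = insert (j : ℤ) (Finset.Ico (0 : ℤ) (j : ℤ)) := by
      ext x
      simp only [Finset.mem_Ico, Finset.mem_insert]
      omega
    rw [h, Finset.sum_insert (by simp)]
    have e : (2:ℝ) ^ (2 * ((j + 1 : ℕ):ℝ)) = 4 * (2:ℝ) ^ (2 * (j:ℝ)) := by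
      push_cast
      rw [mul_add, Real.rpow_add (by norm_num)]
      norm_num
      ring
    rw [e]
    have : 0 < (2:ℝ) ^ (2 * (j:ℝ)) := by positivity
    push_cast
    linarith

lemma young_aux (q : ℝ) (hq : 1 < q) (x y : ℝ) (hx : 0 ≤ x) (hy : 0 ≤ y) :
    x ^ (q - 1) * y ≤ x ^ q + y ^ q := by
  have key : ∀ z : ℝ, 0 ≤ z → z ^ (q - 1) * z = z ^ q := by
    intro z hz
    rw [← Real.rpow_add_one' hz (by linarith)]
    congr 1
    ring
  have h1 := Real.rpow_nonneg hx q
  have h2 := Real.rpow_nonneg hy q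
  rcases le_total x y with h | h
  · have : x ^ (q - 1) * y ≤ y ^ (q - 1) * y :=
      mul_le_mul_of_nonneg_right (Real.rpow_le_rpow hx h (by linarith)) hy
    rw [key y hy] at this
    linarith
  · have : x ^ (q - 1) * y ≤ x ^ (q - 1) * x :=
      mul_le_mul_of_nonneg_left h (Real.rpow_nonneg hx _)
    rw [key x hx] at this
    linarith

lemma term_aux (r q : ℝ) (hq : 1 < q) (a : ℤ → ℝ) (ha : ∀ j, 0 ≤ a j) (j : ℕ) (k : ℤ)
    (hk : k ∈ Finset.Icc (-2 : ℤ) 2) :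
    ENNReal.ofReal ((2:ℝ) ^ (r * (j:ℝ) * q) * a j ^ (q - 1)) * ENNReal.ofReal (a ((j:ℤ) + k)) ≤
      ENNReal.ofReal ((2:ℝ) ^ (2 * |r|)) *
        (ENNReal.ofReal ((2:ℝ) ^ (r * (((j:ℤ)):ℝ)) * a j) ^ q +
         ENNReal.ofReal ((2:ℝ) ^ (r * (((j:ℤ) + k : ℤ):ℝ)) * a ((j:ℤ) + k)) ^ q) := by
  have hx : 0 ≤ (2:ℝ) ^ (r * (((j:ℤ)):ℝ)) * a j := mul_nonneg (by positivity) (ha _)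
  have hy : 0 ≤ (2:ℝ) ^ (r * (((j:ℤ) + k : ℤ):ℝ)) * a ((j:ℤ) + k) :=
    mul_nonneg (by positivity) (ha _)
  have ha' := Real.rpow_nonneg (ha j) (q - 1)
  rw [ENNReal.ofReal_rpow_of_nonneg hx (by linarith),
    ENNReal.ofReal_rpow_of_nonneg hy (by linarith),
    ← ENNReal.ofReal_add (Real.rpow_nonneg hx _) (Real.rpow_nonneg hy _),
    ← ENNReal.ofReal_mul (by positivity), ← ENNReal.ofReal_mul (by positivity)]
  apply ENNReal.ofReal_le_ofReal
  have hY := young_aux q hq _ _ hx hy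
  have e : (2:ℝ) ^ (r * (j:ℝ) * q) * a j ^ (q - 1) * a ((j:ℤ) + k) =
      (2:ℝ) ^ (-(r * (k:ℝ))) * (((2:ℝ) ^ (r * (((j:ℤ)):ℝ)) * a j) ^ (q - 1) *
        ((2:ℝ) ^ (r * (((j:ℤ) + k : ℤ):ℝ)) * a ((j:ℤ) + k))) := by
    rw [Real.mul_rpow (by positivity) (ha _), ← Real.rpow_mul (by norm_num)]
    have : (2:ℝ) ^ (r * (j:ℝ) * q) = (2:ℝ) ^ (-(r * (k:ℝ))) *
        ((2:ℝ) ^ (r * (((j:ℤ)):ℝ) * (q - 1)) * (2:ℝ) ^ (r * (((j:ℤ) + k : ℤ):ℝ))) := by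
      rw [← Real.rpow_add (by norm_num), ← Real.rpow_add (by norm_num)]
      congr 1
      push_cast
      ring
    rw [this]
    ring
  rw [e]
  apply mul_le_mul _ hY (mul_nonneg (Real.rpow_nonneg hx _) hy) (by positivity)
  apply Real.rpow_le_rpow_of_exponent_le (by norm_num)
  rw [Finset.mem_Icc] at hk
  have hk' : |(k:ℝ)| ≤ 2 := by
    rw [abs_le]
    exact ⟨by exact_mod_cast hk.1, by exact_mod_cast hk.2⟩
  calc -(r * (k:ℝ)) ≤ |r * (k:ℝ)| := neg_le_abs _
    _ = |(k:ℝ)| * |r| := by rw [abs_mul, mul_comm]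
    _ ≤ 2 * |r| := by gcongr

lemma shift_aux (f : ℤ → ℝ≥0∞) (hf : ∀ j < 0, f j = 0) (k : ℤ) :
    ∑' j : ℕ, f ((j:ℤ) + k) ≤ ∑' j : ℕ, f (j:ℤ) := by
  have h1 : ∑' j : ℕ, f ((j:ℤ) + k) ≤ ∑' j : ℤ, f j :=
    ENNReal.tsum_comp_le_tsum_of_injective (f := fun j : ℕ => (j:ℤ) + k)
      (fun x y h => by simpa using h) f
  have h2 : ∑' j : ℕ, f (j:ℤ) = ∑' j : ℤ, f j := by
    apply Function.Injective.tsum_eq (g := fun j : ℕ => (j:ℤ)) Nat.cast_injective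
    intro x hx
    rcases lt_or_ge x 0 with h | h
    · exact absurd (hf x h) hx
    · exact ⟨x.toNat, Int.toNat_of_nonneg h⟩
  rw [h2]
  exact h1

lemma inner_aux (n : ℕ) (q : ℝ) (hq : 1 < q) (a : ℤ → ℝ) (ha : ∀ j, 0 ≤ a j) (j : ℕ) (k : ℤ)
    (hk : k ∈ Finset.Icc (-2 : ℤ) 2) :
    ∑ m ∈ Finset.Ico (0 : ℤ) ((j:ℤ) + k - 2),
      ENNReal.ofReal ((2:ℝ) ^ ((3 + (n:ℝ)/2) * (m:ℝ) - 2 * (j:ℝ)) * a m) ≤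
    (∑' m : ℕ, ENNReal.ofReal ((2:ℝ) ^ ((1 + (n:ℝ)/2) * (m:ℝ)) * a m) ^ q) ^ (1/q) := by
  set N := (∑' m : ℕ, ENNReal.ofReal ((2:ℝ) ^ ((1 + (n:ℝ)/2) * (m:ℝ)) * a m) ^ q) ^ (1/q) with hN
  have hb : ∀ m : ℕ, ENNReal.ofReal ((2:ℝ) ^ ((1 + (n:ℝ)/2) * (m:ℝ)) * a m) ≤ N := by
    intro m
    rw [hN, one_div, ENNReal.le_rpow_inv_iff (by linarith)]
    exact ENNReal.le_tsum (f := fun m : ℕ =>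
      ENNReal.ofReal ((2:ℝ) ^ ((1 + (n:ℝ)/2) * (m:ℝ)) * a m) ^ q) m
  rw [Finset.mem_Icc] at hk
  calc _ ≤ ∑ m ∈ Finset.Ico (0 : ℤ) (j:ℤ),
      ENNReal.ofReal ((2:ℝ) ^ ((3 + (n:ℝ)/2) * (m:ℝ) - 2 * (j:ℝ)) * a m) := by
        apply Finset.sum_le_sum_of_subset
        apply Finset.Ico_subset_Ico le_rfl
        omega
    _ ≤ ∑ m ∈ Finset.Ico (0 : ℤ) (j:ℤ),
      ENNReal.ofReal ((2:ℝ) ^ (-(2 * (j:ℝ))) * (2:ℝ) ^ (2 * (m:ℝ))) * N := by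
        apply Finset.sum_le_sum
        intro m hm
        rw [Finset.mem_Ico] at hm
        lift m to ℕ using hm.1
        refine le_trans (le_of_eq ?_) (mul_le_mul_right (hb m) _)
        rw [← ENNReal.ofReal_mul (by positivity), ← mul_assoc, ← Real.rpow_add (by norm_num),
          ← Real.rpow_add (by norm_num)]
        congr 3
        push_cast
        ring
    _ = ENNReal.ofReal ((2:ℝ) ^ (-(2 * (j:ℝ))) *
          ∑ m ∈ Finset.Ico (0 : ℤ) (j : ℤ), (2:ℝ) ^ (2 * (m:ℝ))) * N := by
        rw [← Finset.sum_mul, Finset.mul_sum, ENNReal.ofReal_sum_of_nonneg]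
        intro i _
        positivity
    _ ≤ 1 * N := by
        gcongr
        rw [ENNReal.ofReal_le_one]
        calc _ ≤ (2:ℝ) ^ (-(2 * (j:ℝ))) * (2:ℝ) ^ (2 * (j:ℝ)) := by
              gcongr
              exact geom_aux j
          _ = 1 := by
              rw [← Real.rpow_add (by norm_num)]
              simp
    _ = N := one_mul N

/-- The key `ℓ^q` estimate (for the term `K₁`) in the proof of the a priori
Besov bound for the LANS equation: for `q ∈ (1,∞)`, there is `C > 0` depending only on
`n, r, q` such that for every sequence `(a_j)_{j∈ℤ}` of nonnegative reals vanishing for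
negative indices,
`∑_{j≥0} 2^{rjq} a_j^{q−1} ∑_{k=−2}^{2} a_{j+k} (∑_{0≤m<j+k−2} 2^{(3+n/2)m−2j} a_m)
  ≤ C (∑_{m≥0} (2^{(1+n/2)m} a_m)^q)^{1/q} ∑_{j≥0} (2^{rj} a_j)^q`,
interpreted in `[0,∞]`. -/
theorem lq_estimate_K1
    (n : ℕ) (hn : 1 ≤ n) (r : ℝ) (q : ℝ) (hq : 1 < q) :
    ∃ C : ℝ, 0 < C ∧ ∀ a : ℤ → ℝ, (∀ j, 0 ≤ a j) → (∀ j < 0, a j = 0) →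
      (∑' j : ℕ,
          ENNReal.ofReal ((2:ℝ) ^ (r * (j:ℝ) * q) * a j ^ (q - 1)) *
            ∑ k ∈ Finset.Icc (-2 : ℤ) 2,
              ENNReal.ofReal (a ((j:ℤ) + k)) *
                ∑ m ∈ Finset.Ico (0 : ℤ) ((j:ℤ) + k - 2),
                  ENNReal.ofReal
                    ((2:ℝ) ^ ((3 + (n:ℝ)/2) * (m:ℝ) - 2 * (j:ℝ)) * a m))
        ≤ ENNReal.ofReal C *
          (∑' m : ℕ, ENNReal.ofReal ((2:ℝ) ^ ((1 + (n:ℝ)/2) * (m:ℝ)) * a m) ^ q) ^ (1/q) *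
          ∑' j : ℕ, ENNReal.ofReal ((2:ℝ) ^ (r * (j:ℝ)) * a j) ^ q := by
  refine ⟨10 * (2:ℝ) ^ (2 * |r|), by positivity, ?_⟩
  intro a ha ha0
  set N := (∑' m : ℕ, ENNReal.ofReal ((2:ℝ) ^ ((1 + (n:ℝ)/2) * (m:ℝ)) * a m) ^ q) ^ (1/q) with hN
  set D := ENNReal.ofReal ((2:ℝ) ^ (2 * |r|)) with hD
  let f : ℤ → ℝ≥0∞ := fun j => ENNReal.ofReal ((2:ℝ) ^ (r * (j:ℝ)) * a j) ^ q
  have hf : ∀ j < 0, f j = 0 := by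
    intro j hj
    simp only [f, ha0 j hj, mul_zero, ENNReal.ofReal_zero]
    exact ENNReal.zero_rpow_of_pos (by linarith)
  have hS : ∑' j : ℕ, ENNReal.ofReal ((2:ℝ) ^ (r * (j:ℝ)) * a j) ^ q = ∑' j : ℕ, f (j:ℤ) := by
    simp [f]
  rw [hS]
  calc _ ≤ ∑' j : ℕ, ∑ k ∈ Finset.Icc (-2 : ℤ) 2, D * N * (f (j:ℤ) + f ((j:ℤ) + k)) := by
        apply ENNReal.tsum_le_tsum
        intro j
        rw [Finset.mul_sum]
        apply Finset.sum_le_sum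
        intro k hk
        rw [← mul_assoc]
        refine le_trans (mul_le_mul' (term_aux r q hq a ha j k hk)
          (inner_aux n q hq a ha j k hk)) (le_of_eq ?_)
        simp only [f, ← hN, ← hD]
        ring
    _ = ∑ k ∈ Finset.Icc (-2 : ℤ) 2, D * N * (∑' j : ℕ, f (j:ℤ) + ∑' j : ℕ, f ((j:ℤ) + k)) := by
        rw [Summable.tsum_finsetSum (fun _ _ => ENNReal.summable)]
        apply Finset.sum_congr rfl
        intro k _
        rw [ENNReal.tsum_mul_left, ENNReal.tsum_add]
    _ ≤ ∑ k ∈ Finset.Icc (-2 : ℤ) 2, D * N * (∑' j : ℕ, f (j:ℤ) + ∑' j : ℕ, f (j:ℤ)) := by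
        apply Finset.sum_le_sum
        intro k _
        gcongr D * N * (_ + ?_)
        exact shift_aux f hf k
    _ = _ := by
        rw [Finset.sum_const, ENNReal.ofReal_mul (by norm_num), ← hD]
        simp
        ring
end
end
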